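/- arXiv:1404.3395 — 4 statements merged into one kernel-verified Lean document; each statement's English description precedes it below -/
import Mathlib

section
/- For integers n ≥ 2 and 1 ≤ k ≤ n-1, the union over all permutations τ of {1,...,n} of the sets of parenthesizations with k couples of parentheses of the list τ(1),...,τ(n) (i.e., the set OS₂((1,...,n),k)) is in bijection with the set of admissible internally ordered k-partitions of {1,...,n+k-1}. -/
/-- An admissible internally ordered `k`-partition of `{1,...,m}`. -/
def IsIOPart (m k : ℕ) (P : Finset (List ℕ)) : Prop :=
  P.card = k ∧ (∀ l ∈ P, l.Nodup ∧ 2 ≤ l.length) ∧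
  (∀ l ∈ P, ∀ l' ∈ P, l ≠ l' → ∀ x ∈ l, x ∉ l') ∧
  (∀ x, x ∈ Finset.Icc 1 m ↔ ∃ l ∈ P, x ∈ l)

/-- A parenthesization with `k` couples of parentheses of a list of `n` entries,
viewed as a nested family of `k` intervals of positions `{1,...,n}`: each interval
has cardinality ≥ 2, the family contains the full interval, and any two members
are nested or disjoint. -/
def IsIntNested (n k : ℕ) (S : Finset (Finset ℕ)) : Prop :=
  S.card = k ∧ Finset.Icc 1 n ∈ S ∧
  (∀ A ∈ S, 2 ≤ A.card ∧ ∃ i j, 1 ≤ i ∧ i ≤ j ∧ j ≤ n ∧ A = Finset.Icc i j) ∧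
  (∀ A ∈ S, ∀ B ∈ S, A ⊆ B ∨ B ⊆ A ∨ Disjoint A B)


noncomputable section NestedCount

open Finset

/-! ### Compositions with parts at least two -/

def cg : PowerSeries ℚ := PowerSeries.mk (fun d => if 2 ≤ d then (1:ℚ) else 0)

def cc (m k : ℕ) : ℚ := PowerSeries.coeff m (cg ^ k)

lemma cc_zero (m : ℕ) : cc m 0 = if m = 0 then 1 else 0 := by
  simp [cc, PowerSeries.coeff_one]

lemma cc_succ (m k : ℕ) :
    cc m (k+1) = ∑ x ∈ antidiagonal m, (if 2 ≤ x.1 then (1:ℚ) else 0) * cc x.2 k := by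
  unfold cc
  rw [pow_succ', PowerSeries.coeff_mul]
  simp [cg]

lemma cc_deriv (m k : ℕ) :
    (m:ℚ) * cc m (k+1) =
      (k+1) * ∑ x ∈ antidiagonal m, (if 2 ≤ x.1 then (x.1:ℚ) else 0) * cc x.2 k := by
  induction k generalizing m with
  | zero =>
    rw [cc_succ, Finset.mul_sum, Finset.mul_sum]
    refine Finset.sum_congr rfl ?_
    rintro ⟨d, e⟩ h
    rw [HasAntidiagonal.mem_antidiagonal] at h; simp only at h
    rw [cc_zero]
    by_cases he : e = 0
    · subst he
      simp at h
      subst h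
      simp
    · simp [he]
  | succ k ih =>
    have h1 : (m:ℚ) * cc m (k+1+1) =
        ∑ x ∈ antidiagonal m, (if 2 ≤ x.1 then (x.1:ℚ) else 0) * cc x.2 (k+1) +
        ∑ x ∈ antidiagonal m, (if 2 ≤ x.1 then (1:ℚ) else 0) * (x.2 * cc x.2 (k+1)) := by
      rw [cc_succ, Finset.mul_sum, ← Finset.sum_add_distrib]
      refine Finset.sum_congr rfl ?_
      rintro ⟨d, e⟩ h
      rw [HasAntidiagonal.mem_antidiagonal] at h; simp only at h
      have : (m:ℚ) = d + e := by exact_mod_cast h.symm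
      rw [this]
      split_ifs <;> ring
    have h2 : ∑ x ∈ antidiagonal m, (if 2 ≤ x.1 then (1:ℚ) else 0) * (x.2 * cc x.2 (k+1)) =
        (k+1) * ∑ x ∈ antidiagonal m, (if 2 ≤ x.1 then (x.1:ℚ) else 0) * cc x.2 (k+1) := by
      have e1 : ∑ x ∈ antidiagonal m, (if 2 ≤ x.1 then (1:ℚ) else 0) * (x.2 * cc x.2 (k+1)) =
          (k+1) * PowerSeries.coeff m (cg * (PowerSeries.mk (fun d => if 2 ≤ d then (d:ℚ) else 0)
            * cg ^ k)) := by
        rw [PowerSeries.coeff_mul, Finset.mul_sum]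
        refine Finset.sum_congr rfl ?_
        rintro ⟨d, e⟩ h
        rw [ih, PowerSeries.coeff_mul]
        simp only [cg, cc, PowerSeries.coeff_mk]
        ring
      rw [e1]
      have e2 : cg * (PowerSeries.mk (fun d => if 2 ≤ d then (d:ℚ) else 0) * cg ^ k) =
          PowerSeries.mk (fun d => if 2 ≤ d then (d:ℚ) else 0) * cg ^ (k+1) := by ring
      rw [e2, PowerSeries.coeff_mul]
      simp only [cc, PowerSeries.coeff_mk]
    rw [h1, h2]
    push_cast
    ring

/-! ### Nested families of intervals encoded by pairs -/

def Good (n : ℕ) (S : Finset (ℕ × ℕ)) : Prop :=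
  (∀ p ∈ S, 1 ≤ p.1 ∧ p.1 < p.2 ∧ p.2 ≤ n) ∧
  ∀ p ∈ S, ∀ q ∈ S, p.2 < q.1 ∨ q.2 < p.1 ∨ (p.1 ≤ q.1 ∧ q.2 ≤ p.2) ∨ (q.1 ≤ p.1 ∧ p.2 ≤ q.2)

open Classical in
def cuts (n : ℕ) (S : Finset (ℕ × ℕ)) : Finset ℕ :=
  (Icc 1 n).filter (fun i => ∀ p ∈ S, ¬ (p.1 ≤ i ∧ i < p.2))

open Classical in
def fam (n k r : ℕ) : Finset (Finset (ℕ × ℕ)) :=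
  ((Icc 1 n ×ˢ Icc 1 n).powerset).filter
    (fun S => Good n S ∧ S.card = k ∧ (cuts n S).card = r)

lemma mem_cuts {n : ℕ} {S : Finset (ℕ × ℕ)} {i : ℕ} :
    i ∈ cuts n S ↔ (1 ≤ i ∧ i ≤ n) ∧ ∀ p ∈ S, ¬ (p.1 ≤ i ∧ i < p.2) := by
  simp [cuts]

lemma mem_fam {n k r : ℕ} {S : Finset (ℕ × ℕ)} :
    S ∈ fam n k r ↔ Good n S ∧ S.card = k ∧ (cuts n S).card = r := by
  classical
  unfold fam
  rw [mem_filter, and_iff_right_iff_imp]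
  rintro ⟨h, -⟩
  rw [mem_powerset]
  intro p hp
  have := h.1 p hp
  simp only [mem_product, mem_Icc]
  omega

lemma cover {N : ℕ} {S : Finset (ℕ × ℕ)} (hS : Good N S) (a n : ℕ) (han : a ≤ n)
    (h : ∀ i, a ≤ i → i ≤ n → ∃ p ∈ S, p.1 ≤ i ∧ i < p.2) :
    ∃ p ∈ S, p.1 ≤ a ∧ n < p.2 := by
  induction n, han using Nat.le_induction with
  | base => exact h a le_rfl le_rfl
  | succ n han ih =>
    obtain ⟨p, hp, h1, h2⟩ := ih (fun i hi hi' => h i hi (by omega))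
    by_cases hlt : n + 1 < p.2
    · exact ⟨p, hp, h1, hlt⟩
    obtain ⟨q, hq, h3, h4⟩ := h (n+1) (by omega) le_rfl
    have := hS.2 p hp q hq
    exact ⟨q, hq, by omega, h4⟩

lemma cuts_insert {n a : ℕ} {S : Finset (ℕ × ℕ)} (hS : Good (n+1) S)
    (_ha : 1 ≤ a) (_han : a ≤ n) :
    cuts (n+1) (insert (a, n+1) S) = insert (n+1) ((cuts (n+1) S).filter (· < a)) := by
  ext i
  simp only [mem_cuts, mem_insert, mem_filter, forall_eq_or_imp]
  constructor
  · rintro ⟨h1, h2, h3⟩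
    by_cases hi : i = n+1
    · left; exact hi
    · right; exact ⟨⟨h1, h3⟩, by omega⟩
  · rintro (rfl | ⟨⟨h1, h2⟩, h3⟩)
    · refine ⟨by omega, by omega, ?_⟩
      intro p hp
      have := hS.1 p hp
      omega
    · exact ⟨h1, by omega, h2⟩

lemma card_cuts_insert {n a : ℕ} {S : Finset (ℕ × ℕ)} (hS : Good (n+1) S) (ha : 1 ≤ a)
    (han : a ≤ n) :
    (cuts (n+1) (insert (a, n+1) S)).card = ((cuts (n+1) S).filter (· < a)).card + 1 := by
  rw [cuts_insert hS ha han, card_insert_of_notMem]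
  simp only [mem_filter]
  omega

lemma last_mem_cuts {n : ℕ} {S : Finset (ℕ × ℕ)} (hS : Good (n+1) S) : n+1 ∈ cuts (n+1) S := by
  rw [mem_cuts]
  refine ⟨by omega, ?_⟩
  intro p hp
  have := hS.1 p hp
  omega

lemma Good.mono {n : ℕ} {S S' : Finset (ℕ × ℕ)} (hS : Good n S) (h : S' ⊆ S) : Good n S' :=
  ⟨fun p hp => hS.1 p (h hp), fun p hp q hq => hS.2 p (h hp) q (h hq)⟩

/-- Decomposition of a family covering the last position. -/
lemma exists_root {n : ℕ} {S : Finset (ℕ × ℕ)} (hS : Good (n+1) S)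
    (hc : ∃ p ∈ S, p.2 = n+1) :
    ∃ a, 1 ≤ a ∧ a ≤ n ∧ (a, n+1) ∈ S ∧ (∀ p ∈ S, p.2 < a ∨ a ≤ p.1) := by
  classical
  have hex : ∃ a, (a, n+1) ∈ S := by
    obtain ⟨⟨a, b⟩, hp, h⟩ := hc
    simp only at h
    subst h
    exact ⟨a, hp⟩
  refine ⟨Nat.find hex, ?_, ?_, Nat.find_spec hex, ?_⟩
  · exact (hS.1 _ (Nat.find_spec hex)).1
  · have := (hS.1 _ (Nat.find_spec hex)).2.1
    simp only at this
    omega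
  · rintro ⟨b, c⟩ hp
    have h1 := hS.2 _ hp _ (Nat.find_spec hex)
    have h2 := hS.1 _ hp
    simp only at h1 h2 ⊢
    by_cases hcn : c = n+1
    · subst hcn
      right
      exact Nat.find_min' hex hp
    · omega

lemma fam_uncovered (n k r : ℕ) :
    (open Classical in (fam (n+1) k (r+1)).filter (fun S => ¬ ∃ p ∈ S, p.2 = n+1)) = fam n k r := by
  classical
  ext S
  simp only [mem_filter, mem_fam]
  have key : (∀ p ∈ S, p.2 ≤ n) → Good n S → (cuts (n+1) S).card = (cuts n S).card + 1 := by
    intro h hS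
    have : cuts (n+1) S = insert (n+1) (cuts n S) := by
      ext i
      simp only [mem_insert, mem_cuts]
      constructor
      · rintro ⟨h1, h2⟩
        by_cases hi : i = n+1
        · left; exact hi
        · right; exact ⟨by omega, h2⟩
      · rintro (rfl | ⟨h1, h2⟩)
        · refine ⟨by omega, fun p hp => ?_⟩
          have := h p hp
          omega
        · exact ⟨by omega, h2⟩
    rw [this, card_insert_of_notMem]
    simp [mem_cuts]
  constructor
  · rintro ⟨⟨h1, h2, h3⟩, h4⟩
    push Not at h4
    have h5 : ∀ p ∈ S, p.2 ≤ n := fun p hp => by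
      have := h4 p hp
      have := h1.1 p hp
      omega
    have h6 : Good n S := ⟨fun p hp => ⟨(h1.1 p hp).1, (h1.1 p hp).2.1, h5 p hp⟩, h1.2⟩
    have := key h5 h6
    exact ⟨h6, h2, by omega⟩
  · rintro ⟨h1, h2, h3⟩
    have h5 : ∀ p ∈ S, p.2 ≤ n := fun p hp => (h1.1 p hp).2.2
    have := key h5 h1
    refine ⟨⟨⟨fun p hp => ?_, h1.2⟩, h2, by omega⟩, ?_⟩
    · have := h1.1 p hp
      omega
    · rintro ⟨p, hp, h⟩
      have := h5 p hp
      omega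

lemma exists_pos {n r : ℕ} {S : Finset (ℕ × ℕ)} (hS : Good (n+1) S)
    (hr : r + 1 < (cuts (n+1) S).card) :
    ∃ a, 1 ≤ a ∧ a ≤ n ∧ ((cuts (n+1) S).filter (· < a)).card = r ∧
      (a, n+1) ∉ S ∧ (∀ p ∈ S, p.2 < a ∨ a ≤ p.1) := by
  classical
  set C := cuts (n+1) S with hC
  have hlast : C.card = (C.filter (· < n+1)).card + 1 := by
    have : C = insert (n+1) (C.filter (· < n+1)) := by
      ext i
      simp only [mem_insert, mem_filter]
      constructor
      · intro hi
        have := (mem_cuts.1 hi).1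
        by_cases h : i = n+1
        · left; exact h
        · right; exact ⟨hi, by omega⟩
      · rintro (rfl | h)
        · exact last_mem_cuts hS
        · exact h.1
    conv_lhs => rw [this]
    rw [card_insert_of_notMem]
    simp
  have hstep : ∀ a, (C.filter (· < a+1)).card ≤ (C.filter (· < a)).card + 1 ∧
      ((C.filter (· < a)).card < (C.filter (· < a+1)).card → a ∈ C) := by
    intro a
    by_cases ha : a ∈ C
    · refine ⟨?_, fun _ => ha⟩
      have : C.filter (· < a+1) ⊆ insert a (C.filter (· < a)) := by
        intro i
        simp only [mem_filter, mem_insert]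
        rintro ⟨h1, h2⟩
        by_cases h : i = a
        · left; exact h
        · right; exact ⟨h1, by omega⟩
      exact (card_le_card this).trans (card_insert_le _ _)
    · have : C.filter (· < a+1) = C.filter (· < a) := by
        ext i
        simp only [mem_filter]
        constructor
        · rintro ⟨h1, h2⟩
          have : i ≠ a := by rintro rfl; exact ha h1
          exact ⟨h1, by omega⟩
        · rintro ⟨h1, h2⟩
          exact ⟨h1, by omega⟩
      rw [this]
      exact ⟨by omega, fun h => by omega⟩
  have hex : ∃ a, 1 ≤ a ∧ r ≤ (C.filter (· < a)).card := ⟨n+1, by omega, by omega⟩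
  obtain ⟨a, ⟨ha1, ha2⟩, hmin⟩ : ∃ a, (1 ≤ a ∧ r ≤ (C.filter (· < a)).card) ∧
      ∀ b < a, ¬ (1 ≤ b ∧ r ≤ (C.filter (· < b)).card) :=
    ⟨Nat.find hex, Nat.find_spec hex, fun b hb => Nat.find_min hex hb⟩
  have hfacts : (C.filter (· < a)).card = r ∧ (a = 1 ∨ (a - 1) ∈ C) := by
    by_cases h1 : a = 1
    · subst h1
      have : C.filter (· < 1) = ∅ := by
        ext i
        simp only [mem_filter, notMem_empty, iff_false]
        rintro ⟨h1, h2⟩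
        have := (mem_cuts.1 h1).1
        omega
      rw [this] at ha2 ⊢
      simp at ha2 ⊢
      exact ha2.symm
    · obtain ⟨b, rfl⟩ : ∃ b, a = b + 1 := ⟨a - 1, by omega⟩
      have hb := hmin b (by omega)
      have h3 := hstep b
      have h4 : (C.filter (· < b)).card < r := by
        by_contra hcon
        exact hb ⟨by omega, by omega⟩
      exact ⟨by omega, Or.inr (by simpa using h3.2 (by omega))⟩
  obtain ⟨hcard, hcut⟩ := hfacts
  have han : a ≤ n := by
    by_contra hcon
    have hsub : C.filter (· < n+1) ⊆ C.filter (· < a) := by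
      intro i
      simp only [mem_filter]
      rintro ⟨h1, h2⟩
      exact ⟨h1, by omega⟩
    have := card_le_card hsub
    omega
  refine ⟨a, ha1, han, hcard, ?_, ?_⟩
  · intro hmem
    have hsub : C.filter (· < n+1) ⊆ C.filter (· < a) := by
      intro i
      simp only [mem_filter]
      rintro ⟨h1, h2⟩
      have := (mem_cuts.1 h1).2 _ hmem
      simp only at this
      exact ⟨h1, by omega⟩
    have := card_le_card hsub
    omega
  · intro p hp
    have h1 := hS.1 p hp
    rcases hcut with h | h
    · right; omega
    · have := (mem_cuts.1 h).2 p hp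
      omega

lemma fam_covered (n k r : ℕ) :
    (open Classical in (fam (n+1) (k+1) (r+1)).filter (fun S => ∃ p ∈ S, p.2 = n+1)).card =
      ∑ r' ∈ Ioc (r+1) (n+1), (fam (n+1) k r').card := by
  classical
  have hdisj : ∀ x ∈ Ioc (r+1) (n+1), ∀ y ∈ Ioc (r+1) (n+1), x ≠ y →
      Disjoint (fam (n+1) k x) (fam (n+1) k y) := by
    intro x _ y _ hxy
    rw [Finset.disjoint_left]
    intro S h1 h2
    rw [mem_fam] at h1 h2
    exact hxy (h1.2.2.symm.trans h2.2.2)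
  rw [← Finset.card_biUnion hdisj]
  have hroot : ∀ S, S ∈ (fam (n+1) (k+1) (r+1)).filter (fun S => ∃ p ∈ S, p.2 = n+1) →
      ∃ a, 1 ≤ a ∧ a ≤ n ∧ (a, n+1) ∈ S ∧ (∀ p ∈ S, p.2 < a ∨ a ≤ p.1) := by
    intro S hS
    rw [mem_filter, mem_fam] at hS
    exact exists_root hS.1.1 hS.2
  choose! f hf1 hf2 hf3 hf4 using hroot
  refine Finset.card_bij (fun S _ => S.erase (f S, n+1)) ?_ ?_ ?_
  · intro S hS
    have g1 := hf1 S hS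
    have g2 := hf2 S hS
    have g3 := hf3 S hS
    have g4 := hf4 S hS
    rw [mem_filter, mem_fam] at hS
    obtain ⟨⟨h1, h2, h3⟩, -⟩ := hS
    set a := f S
    have hg : Good (n+1) (S.erase (a, n+1)) := h1.mono (erase_subset _ _)
    have hc := card_cuts_insert hg g1 g2
    rw [insert_erase g3, h3] at hc
    have hcov : ∃ i, a ≤ i ∧ i ≤ n ∧ i ∈ cuts (n+1) (S.erase (a, n+1)) := by
      by_contra hcon
      push Not at hcon
      obtain ⟨p, hp, hp1, hp2⟩ := cover hg a n g2 (by
        intro i hi hi'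
        have := hcon i hi hi'
        rw [mem_cuts] at this
        push Not at this
        exact this ⟨by omega, by omega⟩)
      have e1 := hg.1 p hp
      have e2 := g4 p (mem_of_mem_erase hp)
      have : p = (a, n+1) := Prod.ext (by simp only; omega) (by simp only; omega)
      exact (mem_erase.1 hp).1 this
    obtain ⟨i, hi1, hi2, hi3⟩ := hcov
    have hsub : insert (n+1) (insert i ((cuts (n+1) (S.erase (a, n+1))).filter (· < a))) ⊆
        cuts (n+1) (S.erase (a, n+1)) := by
      intro j
      simp only [mem_insert, mem_filter]
      rintro (rfl | rfl | h)
      · exact last_mem_cuts hg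
      · exact hi3
      · exact h.1
    have hle := card_le_card hsub
    rw [card_insert_of_notMem (by simp only [mem_insert, mem_filter]; omega),
      card_insert_of_notMem (by simp only [mem_filter]; omega)] at hle
    have hle2 : (cuts (n+1) (S.erase (a, n+1))).card ≤ n+1 := by
      have : (cuts (n+1) (S.erase (a, n+1))).card ≤ (Icc 1 (n+1)).card :=
        card_le_card (filter_subset _ _)
      simpa using this
    rw [mem_biUnion]
    refine ⟨_, mem_Ioc.2 ⟨?_, hle2⟩, mem_fam.2 ⟨hg, ?_, rfl⟩⟩
    · omega
    · rw [card_erase_of_mem g3, h2]; rfl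
  · have aux : ∀ S₁ ∈ (fam (n+1) (k+1) (r+1)).filter (fun S => ∃ p ∈ S, p.2 = n+1),
        ∀ S₂ ∈ (fam (n+1) (k+1) (r+1)).filter (fun S => ∃ p ∈ S, p.2 = n+1),
        S₁.erase (f S₁, n+1) = S₂.erase (f S₂, n+1) → ¬ f S₁ < f S₂ := by
      intro S₁ hS₁ S₂ hS₂ heq hlt
      have a1 := hf1 _ hS₁
      have a2 := hf2 _ hS₁
      have a3 := hf3 _ hS₁
      have b1 := hf1 _ hS₂
      have b2 := hf2 _ hS₂
      have b3 := hf3 _ hS₂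
      have b4 := hf4 _ hS₂
      rw [mem_filter, mem_fam] at hS₁ hS₂
      have hg := hS₁.1.1.mono (erase_subset (f S₁, n+1) S₁)
      have hg2 := hS₂.1.1.mono (erase_subset (f S₂, n+1) S₂)
      have hc1 := card_cuts_insert hg a1 a2
      have hc2 := card_cuts_insert hg2 b1 b2
      rw [insert_erase a3, hS₁.1.2.2, heq] at hc1
      rw [insert_erase b3, hS₂.1.2.2] at hc2
      have hss : (cuts (n+1) (S₂.erase (f S₂, n+1))).filter (· < f S₁) ⊂
          (cuts (n+1) (S₂.erase (f S₂, n+1))).filter (· < f S₂) := by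
        rw [Finset.ssubset_iff_of_subset]
        · refine ⟨f S₂ - 1, ?_, ?_⟩
          · rw [mem_filter, mem_cuts]
            refine ⟨⟨by omega, ?_⟩, by omega⟩
            intro p hp
            have := b4 p (mem_of_mem_erase hp)
            omega
          · rw [mem_filter]
            omega
        · intro i
          simp only [mem_filter]
          rintro ⟨h1, h2⟩
          exact ⟨h1, by omega⟩
      have := card_lt_card hss
      omega
    intro S₁ hS₁ S₂ hS₂ heq
    have e1 := aux S₁ hS₁ S₂ hS₂ heq
    have e2 := aux S₂ hS₂ S₁ hS₁ heq.symm
    have e3 : f S₁ = f S₂ := by omega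
    have e4 : S₁.erase (f S₁, n+1) = S₂.erase (f S₂, n+1) := heq
    calc S₁ = insert (f S₁, n+1) (S₁.erase (f S₁, n+1)) := (insert_erase (hf3 _ hS₁)).symm
      _ = insert (f S₂, n+1) (S₂.erase (f S₂, n+1)) := by rw [e4, e3]
      _ = S₂ := insert_erase (hf3 _ hS₂)
  · intro S hS
    rw [mem_biUnion] at hS
    obtain ⟨r', hr', hS⟩ := hS
    rw [mem_Ioc] at hr'
    rw [mem_fam] at hS
    obtain ⟨h1, h2, h3⟩ := hS
    obtain ⟨a, a1, a2, a3, a4, a5⟩ := exists_pos (r := r) h1 (by omega)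
    have hmem : insert (a, n+1) S ∈
        (fam (n+1) (k+1) (r+1)).filter (fun S => ∃ p ∈ S, p.2 = n+1) := by
      rw [mem_filter, mem_fam]
      refine ⟨⟨⟨?_, ?_⟩, ?_, ?_⟩, ⟨(a, n+1), mem_insert_self _ _, rfl⟩⟩
      · intro p hp
        rcases mem_insert.1 hp with rfl | hp
        · simp only; omega
        · exact h1.1 p hp
      · intro p hp q hq
        rcases mem_insert.1 hp with rfl | hp <;> rcases mem_insert.1 hq with rfl | hq
        · simp
        · have := a5 q hq
          have := h1.1 q hq
          simp only
          omega
        · have := a5 p hp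
          have := h1.1 p hp
          simp only
          omega
        · exact h1.2 p hp q hq
      · rw [card_insert_of_notMem a4, h2]
      · rw [card_cuts_insert h1 a1 a2, a3]
    refine ⟨_, hmem, ?_⟩
    have e : f (insert (a, n+1) S) = a := by
      have b1 := hf1 _ hmem
      have b2 := hf2 _ hmem
      have b3 := hf3 _ hmem
      have b4 := hf4 _ hmem
      have c1 := b4 (a, n+1) (mem_insert_self _ _)
      rcases mem_insert.1 b3 with h | h
      · exact (Prod.ext_iff.1 h).1
      · have c2 := a5 _ h
        simp only at c1 c2
        omega
    simp only [e]
    exact erase_insert a4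

lemma fam_rec (n k r : ℕ) :
    (fam (n+1) (k+1) (r+1)).card = (fam n (k+1) r).card +
      ∑ r' ∈ Ioc (r+1) (n+1), (fam (n+1) k r').card := by
  classical
  rw [← fam_covered n k r, ← fam_uncovered n (k+1) r]
  rw [Nat.add_comm (Finset.card _)]
  exact (Finset.card_filter_add_card_filter_not (s := fam (n+1) (k+1) (r+1))
    (fun S => ∃ p ∈ S, p.2 = n+1)).symm

lemma fam_card_zero (n r : ℕ) : (fam n 0 r).card = if r = n then 1 else 0 := by
  classical
  have hcut : cuts n ∅ = Icc 1 n := by ext i; simp [mem_cuts]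
  have : fam n 0 r = if r = n then {∅} else ∅ := by
    ext S
    rw [mem_fam]
    split_ifs with h
    · rw [mem_singleton]
      constructor
      · intro h; exact card_eq_zero.1 h.2.1
      · rintro rfl
        exact ⟨⟨by simp, by simp⟩, by simp, by rw [hcut]; simp [h]⟩
    · simp only [notMem_empty, iff_false]
      rintro ⟨-, h1, h2⟩
      rw [card_eq_zero.1 h1, hcut] at h2
      simp at h2
      exact h h2.symm
  rw [this]
  split_ifs <;> simp

lemma fam_eq_empty_of_lt {n k r : ℕ} (h : n < r) : fam n k r = ∅ := by
  ext S
  simp only [mem_fam, notMem_empty, iff_false]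
  rintro ⟨-, -, h3⟩
  have : (cuts n S).card ≤ (Icc 1 n).card := card_le_card (filter_subset _ _)
  simp at this
  omega

lemma fam_zero_succ (k r : ℕ) : fam 0 (k+1) r = ∅ := by
  ext S
  simp only [mem_fam, notMem_empty, iff_false]
  rintro ⟨h1, h2, -⟩
  obtain ⟨p, hp⟩ : S.Nonempty := by rw [← card_pos]; omega
  have := h1.1 p hp
  omega

lemma fam_r_zero (n k : ℕ) : fam (n+1) k 0 = ∅ := by
  ext S
  simp only [mem_fam, notMem_empty, iff_false]
  rintro ⟨h1, -, h3⟩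
  have := last_mem_cuts h1
  rw [card_eq_zero.1 h3] at this
  simp at this

lemma cc_eq_zero {m k : ℕ} (h : m < k) : cc m k = 0 := by
  induction k generalizing m with
  | zero => omega
  | succ k ih =>
    rw [cc_succ]
    refine Finset.sum_eq_zero ?_
    rintro ⟨d, e⟩ hx
    rw [HasAntidiagonal.mem_antidiagonal] at hx
    simp only at hx ⊢
    split_ifs with hd
    · rw [ih (by omega)]; simp
    · simp

lemma fam_sum_reindex (n k r : ℕ) (hr : r ≤ n + k + 1) (G : ℕ → ℚ) (hG : ∀ s, n + 1 < s → G s = 0) :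
    ∑ r' ∈ Ioc (r+1) (n+1), G r' =
      ∑ x ∈ antidiagonal (n+k+1-r), (if 2 ≤ x.1 then (1:ℚ) else 0) * G (r + x.1) := by
  have h1 : ∑ r' ∈ Ioc (r+1) (n+1), G r' = ∑ r' ∈ Ioc (r+1) (n+k+1), G r' := by
    refine Finset.sum_subset ?_ ?_
    · intro i
      simp only [mem_Ioc]
      omega
    · intro i hi hi'
      simp only [mem_Ioc] at hi hi'
      exact hG i (by omega)
  rw [h1]
  have h2 : ∑ x ∈ antidiagonal (n+k+1-r), (if 2 ≤ x.1 then (1:ℚ) else 0) * G (r + x.1) =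
      ∑ x ∈ (antidiagonal (n+k+1-r)).filter (fun x => 2 ≤ x.1), G (r + x.1) := by
    rw [Finset.sum_filter]
    refine Finset.sum_congr rfl fun x _ => ?_
    split_ifs <;> simp
  rw [h2]
  refine Finset.sum_bij' (fun s _ => (s - r, n+k+1-r-(s-r))) (fun x _ => r + x.1) ?_ ?_ ?_ ?_ ?_
  · intro s hs
    rw [mem_Ioc] at hs
    rw [mem_filter, HasAntidiagonal.mem_antidiagonal]
    simp only
    omega
  · rintro ⟨d, e⟩ hx
    rw [mem_filter, HasAntidiagonal.mem_antidiagonal] at hx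
    simp only at hx
    rw [mem_Ioc]
    simp only
    omega
  · intro s hs
    rw [mem_Ioc] at hs
    simp only
    omega
  · rintro ⟨d, e⟩ hx
    rw [mem_filter, HasAntidiagonal.mem_antidiagonal] at hx
    simp only at hx
    simp only [Prod.mk.injEq]
    omega
  · intro s hs
    rw [mem_Ioc] at hs
    simp only
    congr 1
    omega

lemma fam_formula (k n r : ℕ) (hr : r ≤ n + k) :
    ((n + k : ℕ) : ℚ) * (fam n k r).card = r * (n+k).choose k * cc (n+k-r) k := by
  induction k generalizing n r with
  | zero =>
    rw [fam_card_zero, cc_zero]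
    simp only [add_zero] at hr ⊢
    by_cases h : r = n
    · subst h; simp
    · rw [if_neg h, if_neg (by omega)]; simp
  | succ k ihk =>
    induction n generalizing r with
    | zero =>
      rw [fam_zero_succ]
      rcases Nat.eq_zero_or_pos r with h | h
      · subst h; simp
      · rw [cc_eq_zero (by omega)]; simp
    | succ n ihn =>
      rcases r with _ | r
      · rw [fam_r_zero]; simp
      have hr' : r ≤ n + k + 1 := by omega
      have i1 := ihn r (by omega)
      have hsum := fam_sum_reindex n k r hr' (fun s => ((fam (n+1) k s).card : ℚ))
        (fun s hs => by simp [fam_eq_empty_of_lt hs])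
      have hrec : ((fam (n+1) (k+1) (r+1)).card : ℚ) = (fam n (k+1) r).card +
          ∑ r' ∈ Ioc (r+1) (n+1), ((fam (n+1) k r').card : ℚ) := by
        exact_mod_cast fam_rec n k r
      rw [hsum] at hrec
      set M := n+k+1-r with hM
      have e1 : n + (k+1) - r = M := by omega
      have e2 : n + 1 + (k + 1) - (r+1) = M := by omega
      rw [e1] at i1
      rw [e2]
      have i2 : ((n+k+1 : ℕ):ℚ) * ∑ x ∈ antidiagonal M, (if 2 ≤ x.1 then (1:ℚ) else 0) *
          ((fam (n+1) k (r+x.1)).card : ℚ) =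
          (n+k+1).choose k * (r * cc M (k+1) + ∑ x ∈ antidiagonal M,
            (if 2 ≤ x.1 then (x.1:ℚ) else 0) * cc x.2 k) := by
        rw [cc_succ, Finset.mul_sum, Finset.mul_sum, ← Finset.sum_add_distrib, Finset.mul_sum]
        refine Finset.sum_congr rfl ?_
        rintro ⟨d, e⟩ hx
        rw [HasAntidiagonal.mem_antidiagonal] at hx
        simp only at hx ⊢
        have := ihk (n+1) (r+d) (by omega)
        rw [show n + 1 + k - (r+d) = e by omega, show n + 1 + k = n + k + 1 by ring] at this
        split_ifs
        · rw [one_mul, this]; push_cast; ring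
        · simp
      have hd := cc_deriv M k
      set D := ∑ x ∈ antidiagonal M, (if 2 ≤ x.1 then (x.1:ℚ) else 0) * cc x.2 k
      have hMq : (M:ℚ) = n + k + 1 - r := by
        rw [hM, Nat.cast_sub hr']; push_cast; ring
      have hch1 : ((n+k+2).choose (k+1) : ℚ) = (n+k+1).choose k + (n+k+1).choose (k+1) := by
        exact_mod_cast Nat.choose_succ_succ (n+k+1) k
      have hch2 : ((n+k+2 : ℕ):ℚ) * (n+k+1).choose k = (n+k+2).choose (k+1) * (k+1) := by
        exact_mod_cast Nat.add_one_mul_choose_eq (n+k+1) k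
      have hpos : ((n+k+1:ℕ):ℚ) ≠ 0 := by positivity
      have hk0 : ((k:ℚ)+1) ≠ 0 := by positivity
      rw [show n + (k+1) = n + k + 1 by ring] at i1
      rw [show n + 1 + (k+1) = n + k + 2 by ring]
      apply mul_left_cancel₀ hpos
      rw [hrec]
      have hD : D = M * cc M (k+1) / (k+1) := by
        field_simp
        linarith
      have hA : ((n+k+1).choose k : ℚ) = (n+k+2).choose (k+1) * (k+1) / (n+k+2) := by
        rw [← hch2]; push_cast; field_simp
      have hB : ((n+k+1).choose (k+1) : ℚ) =
          (n+k+2).choose (k+1) - (n+k+2).choose (k+1) * (k+1) / (n+k+2) := by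
        rw [← hA, hch1]; ring
      have expand : ((n+k+1:ℕ):ℚ) * (((n+k+2:ℕ):ℚ) * ((fam n (k+1) r).card +
          ∑ x ∈ antidiagonal M, (if 2 ≤ x.1 then (1:ℚ) else 0) *
          ((fam (n+1) k (r+x.1)).card : ℚ))) =
          ((n+k+2:ℕ):ℚ) * (r * (n+k+1).choose (k+1) * cc M (k+1) +
          (n+k+1).choose k * (r * cc M (k+1) + D)) := by
        rw [← i1, ← i2]; ring
      rw [expand, hD, hA, hB, hMq]
      push_cast
      field_simp
      ring

/-! ### Transfer to families of finsets -/

lemma cuts_one_iff {n : ℕ} (hn : 2 ≤ n) {T : Finset (ℕ × ℕ)} (hT : Good n T) :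
    (cuts n T).card = 1 ↔ (1, n) ∈ T := by
  obtain ⟨m, rfl⟩ : ∃ m, n = m + 1 := ⟨n - 1, by omega⟩
  have hl := last_mem_cuts hT
  constructor
  · intro h
    obtain ⟨x, hx⟩ := card_eq_one.1 h
    have hx' : x = m + 1 := by rw [hx] at hl; exact (mem_singleton.1 hl).symm
    subst hx'
    obtain ⟨p, hp, h1, h2⟩ := cover hT 1 m (by omega) (by
      intro i hi hi'
      have : i ∉ cuts (m+1) T := by rw [hx, mem_singleton]; omega
      rw [mem_cuts] at this
      push Not at this
      exact this ⟨by omega, by omega⟩)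
    have := hT.1 p hp
    have : p = (1, m+1) := Prod.ext (by simp only; omega) (by simp only; omega)
    rwa [this] at hp
  · intro h
    rw [card_eq_one]
    refine ⟨m+1, ?_⟩
    ext i
    rw [mem_singleton]
    constructor
    · intro hi
      rw [mem_cuts] at hi
      have := hi.2 _ h
      simp only at this
      omega
    · rintro rfl; exact hl

lemma lam_iff {p q : ℕ × ℕ} (hp : p.1 < p.2) (hq : q.1 < q.2) :
    (p.2 < q.1 ∨ q.2 < p.1 ∨ (p.1 ≤ q.1 ∧ q.2 ≤ p.2) ∨ (q.1 ≤ p.1 ∧ p.2 ≤ q.2)) ↔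
    (Icc p.1 p.2 ⊆ Icc q.1 q.2 ∨ Icc q.1 q.2 ⊆ Icc p.1 p.2 ∨
      Disjoint (Icc p.1 p.2) (Icc q.1 q.2)) := by
  rw [Finset.Icc_subset_Icc_iff hp.le, Finset.Icc_subset_Icc_iff hq.le]
  have : Disjoint (Icc p.1 p.2) (Icc q.1 q.2) ↔ p.2 < q.1 ∨ q.2 < p.1 := by
    rw [Finset.disjoint_left]
    simp only [mem_Icc]
    constructor
    · intro h
      have := @h (max p.1 q.1)
      omega
    · intro h a
      omega
  rw [this]
  tauto

lemma icc_inj {p q : ℕ × ℕ} (hp : p.1 < p.2) (hq : q.1 < q.2)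
    (h : Icc p.1 p.2 = Icc q.1 q.2) : p = q := by
  have h1 := (Finset.Icc_subset_Icc_iff hp.le).1 h.le
  have h2 := (Finset.Icc_subset_Icc_iff hq.le).1 h.ge
  exact Prod.ext (by omega) (by omega)

lemma nested_image {n k : ℕ} (hn : 2 ≤ n) {T : Finset (ℕ × ℕ)} (hT : T ∈ fam n k 1) :
    IsIntNested n k (T.image (fun p => Icc p.1 p.2)) := by
  rw [mem_fam] at hT
  obtain ⟨h1, h2, h3⟩ := hT
  rw [cuts_one_iff hn h1] at h3
  refine ⟨?_, ?_, ?_, ?_⟩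
  · rw [card_image_of_injOn, h2]
    intro p hp q hq h
    exact icc_inj (h1.1 p hp).2.1 (h1.1 q hq).2.1 h
  · exact mem_image.2 ⟨_, h3, rfl⟩
  · intro A hA
    obtain ⟨p, hp, rfl⟩ := mem_image.1 hA
    have := h1.1 p hp
    refine ⟨?_, p.1, p.2, by omega, by omega, by omega, rfl⟩
    rw [Nat.card_Icc]
    omega
  · intro A hA B hB
    obtain ⟨p, hp, rfl⟩ := mem_image.1 hA
    obtain ⟨q, hq, rfl⟩ := mem_image.1 hB
    exact (lam_iff (h1.1 p hp).2.1 (h1.1 q hq).2.1).1 (h1.2 p hp q hq)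

def nestedMap (n k : ℕ) (hn : 2 ≤ n) (T : {T // T ∈ fam n k 1}) :
    {S : Finset (Finset ℕ) // IsIntNested n k S} :=
  ⟨T.1.image (fun p => Icc p.1 p.2), nested_image hn T.2⟩

lemma nestedMap_bij (n k : ℕ) (hn : 2 ≤ n) : Function.Bijective (nestedMap n k hn) := by
  classical
  constructor
  · have aux : ∀ T₁ ∈ fam n k 1, ∀ T₂ ∈ fam n k 1,
        T₁.image (fun p => Icc p.1 p.2) = T₂.image (fun p => Icc p.1 p.2) → T₁ ⊆ T₂ := by
      intro T₁ h₁ T₂ h₂ h p hp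
      have hm : Icc p.1 p.2 ∈ T₂.image (fun p => Icc p.1 p.2) := by
        rw [← h]; exact mem_image.2 ⟨p, hp, rfl⟩
      obtain ⟨q, hq, hqp⟩ := mem_image.1 hm
      rw [mem_fam] at h₁ h₂
      have := icc_inj (h₂.1.1 q hq).2.1 (h₁.1.1 p hp).2.1 hqp
      rwa [← this]
    rintro ⟨T₁, h₁⟩ ⟨T₂, h₂⟩ h
    have h' := congrArg Subtype.val h
    simp only [nestedMap] at h'
    exact Subtype.ext (Subset.antisymm (aux _ h₁ _ h₂ h') (aux _ h₂ _ h₁ h'.symm))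
  · rintro ⟨S, hS⟩
    obtain ⟨s1, s2, s3, s4⟩ := hS
    set T := (Icc 1 n ×ˢ Icc 1 n).filter (fun p => p.1 < p.2 ∧ Icc p.1 p.2 ∈ S) with hT
    have hmem : ∀ p, p ∈ T ↔ ((1 ≤ p.1 ∧ p.1 ≤ n) ∧ (1 ≤ p.2 ∧ p.2 ≤ n)) ∧
        p.1 < p.2 ∧ Icc p.1 p.2 ∈ S := by
      intro p
      simp [hT]
    have him : T.image (fun p => Icc p.1 p.2) = S := by
      ext A
      rw [mem_image]
      constructor
      · rintro ⟨p, hp, rfl⟩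
        exact ((hmem p).1 hp).2.2
      · intro hA
        obtain ⟨hc, i, j, hi, hij, hj, rfl⟩ := s3 A hA
        rw [Nat.card_Icc] at hc
        refine ⟨(i, j), (hmem _).2 ⟨?_, ?_, hA⟩, rfl⟩
        · simp only; omega
        · simp only; omega
    have hg : Good n T := by
      constructor
      · intro p hp
        have := (hmem p).1 hp
        omega
      · intro p hp q hq
        have h1 := (hmem p).1 hp
        have h2 := (hmem q).1 hq
        exact (lam_iff h1.2.1 h2.2.1).2 (s4 _ h1.2.2 _ h2.2.2)
    have hf : T ∈ fam n k 1 := by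
      rw [mem_fam, cuts_one_iff hn hg]
      refine ⟨hg, ?_, ?_⟩
      · rw [← s1, ← him, card_image_of_injOn]
        intro p hp q hq h
        exact icc_inj (hg.1 p hp).2.1 (hg.1 q hq).2.1 h
      · rw [hmem]
        simp only
        exact ⟨by omega, by omega, s2⟩
    exact ⟨⟨T, hf⟩, Subtype.ext him⟩

/-! ### Internally ordered partitions -/

def IsP (U : Finset ℕ) (k : ℕ) (P : Finset (List ℕ)) : Prop :=
  P.card = k ∧ (∀ l ∈ P, l.Nodup ∧ 2 ≤ l.length) ∧
  (∀ l ∈ P, ∀ l' ∈ P, l ≠ l' → ∀ x ∈ l, x ∉ l') ∧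
  (∀ x, x ∈ U ↔ ∃ l ∈ P, x ∈ l)

def perms (W : Finset ℕ) : Finset (List ℕ) := W.toList.permutations.toFinset

lemma mem_perms {W : Finset ℕ} {l : List ℕ} : l ∈ perms W ↔ l.Nodup ∧ l.toFinset = W := by
  unfold perms
  rw [List.mem_toFinset, List.mem_permutations]
  constructor
  · intro h
    refine ⟨h.nodup_iff.2 W.nodup_toList, ?_⟩
    rw [List.toFinset_eq_of_perm _ _ h, Finset.toList_toFinset]
  · rintro ⟨h, rfl⟩
    exact (List.toFinset_toList h).symm

lemma card_perms (W : Finset ℕ) : (perms W).card = W.card.factorial := by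
  unfold perms
  rw [List.toFinset_card_of_nodup (List.nodup_permutations _ W.nodup_toList),
    List.length_permutations, Finset.length_toList]

open Classical in
def partF (U : Finset ℕ) (k : ℕ) : Finset (Finset (List ℕ)) :=
  ((U.powerset.biUnion perms).powerset).filter (IsP U k)

lemma mem_partF {U : Finset ℕ} {k : ℕ} {P : Finset (List ℕ)} : P ∈ partF U k ↔ IsP U k P := by
  classical
  unfold partF
  rw [mem_filter, and_iff_right_iff_imp]
  intro h
  rw [mem_powerset]
  intro l hl
  rw [mem_biUnion]
  refine ⟨l.toFinset, ?_, mem_perms.2 ⟨(h.2.1 l hl).1, rfl⟩⟩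
  rw [mem_powerset]
  intro x hx
  exact (h.2.2.2 x).2 ⟨l, hl, List.mem_toFinset.1 hx⟩

lemma partF_rec (U : Finset ℕ) (k x : ℕ) (hx : x ∈ U) :
    (partF U (k+1)).card = ∑ V ∈ (U.erase x).powerset with V.Nonempty,
      (V.card + 1).factorial * (partF (U.erase x \ V) k).card := by
  classical
  have h1 : ∑ V ∈ (U.erase x).powerset with V.Nonempty,
      (V.card + 1).factorial * (partF (U.erase x \ V) k).card =
      (((U.erase x).powerset.filter (fun V => V.Nonempty)).sigma
        (fun V => perms (insert x V) ×ˢ partF (U.erase x \ V) k)).card := by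
    rw [card_sigma]
    refine Finset.sum_congr rfl ?_
    intro V hV
    rw [mem_filter, mem_powerset] at hV
    rw [card_product, card_perms, card_insert_of_notMem]
    intro hxV
    exact (mem_erase.1 (hV.1 hxV)).1 rfl
  rw [h1]
  symm
  refine Finset.card_bij (fun y _ => insert y.2.1 y.2.2) ?_ ?_ ?_
  · rintro ⟨V, l, P⟩ hy
    simp only [mem_sigma, mem_filter, mem_powerset, mem_product, mem_perms, mem_partF] at hy
    obtain ⟨⟨hV, hVn⟩, ⟨hl1, hl2⟩, hP1, hP2, hP3, hP4⟩ := hy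
    simp only
    rw [mem_partF]
    have hxV : x ∉ V := fun h => (mem_erase.1 (hV h)).1 rfl
    have hlmem : ∀ z, z ∈ l ↔ z = x ∨ z ∈ V := by
      intro z
      rw [← List.mem_toFinset, hl2, mem_insert]
    have hdis : ∀ l' ∈ P, ∀ z ∈ l', z ∉ l := by
      intro l' hl' z hz hzl
      have := (hP4 z).2 ⟨l', hl', hz⟩
      rw [mem_sdiff, mem_erase] at this
      rcases (hlmem z).1 hzl with h | h
      · exact this.1.1 h
      · exact this.2 h
    have hlP : l ∉ P := fun h => hdis l h x ((hlmem x).2 (Or.inl rfl)) ((hlmem x).2 (Or.inl rfl))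
    refine ⟨?_, ?_, ?_, ?_⟩
    · rw [card_insert_of_notMem hlP, hP1]
    · intro l' hl'
      rcases mem_insert.1 hl' with rfl | hl'
      · refine ⟨hl1, ?_⟩
        rw [← List.toFinset_card_of_nodup hl1, hl2, card_insert_of_notMem hxV]
        have := card_pos.2 hVn
        omega
      · exact hP2 l' hl'
    · intro l₁ h₁ l₂ h₂ hne z hz hz'
      rcases mem_insert.1 h₁ with e₁ | g₁ <;> rcases mem_insert.1 h₂ with e₂ | g₂
      · exact hne (e₁.trans e₂.symm)
      · subst e₁
        exact hdis l₂ g₂ z hz' hz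
      · subst e₂
        exact hdis l₁ g₁ z hz hz'
      · exact hP3 l₁ g₁ l₂ g₂ hne z hz hz'
    · intro z
      constructor
      · intro hz
        by_cases hzl : z ∈ l
        · exact ⟨l, mem_insert_self _ _, hzl⟩
        · have hz' : z ∈ U.erase x \ V := by
            rw [mem_sdiff, mem_erase]
            rw [hlmem] at hzl
            tauto
          obtain ⟨l', hl', h⟩ := (hP4 z).1 hz'
          exact ⟨l', mem_insert_of_mem hl', h⟩
      · rintro ⟨l', hl', hz⟩
        rcases mem_insert.1 hl' with e | hl'
        · subst e
          rcases (hlmem z).1 hz with rfl | h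
          · exact hx
          · exact mem_of_mem_erase (hV h)
        · have := (hP4 z).2 ⟨l', hl', hz⟩
          rw [mem_sdiff] at this
          exact mem_of_mem_erase this.1
  · have aux : ∀ (V : Finset ℕ) (l : List ℕ) (P : Finset (List ℕ)), (V ∈ (U.erase x).powerset ∧ V.Nonempty) ∧
        (l.Nodup ∧ l.toFinset = insert x V) ∧ IsP (U.erase x \ V) k P →
        x ∈ l ∧ V = l.toFinset.erase x ∧ ∀ l' ∈ P, x ∉ l' := by
      rintro V l P ⟨⟨hV, hVn⟩, ⟨hl1, hl2⟩, hP1, hP2, hP3, hP4⟩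
      have hxV : x ∉ V := fun h => (mem_erase.1 (mem_powerset.1 hV h)).1 rfl
      refine ⟨?_, ?_, ?_⟩
      · rw [← List.mem_toFinset, hl2]; exact mem_insert_self _ _
      · rw [hl2, erase_insert hxV]
      · intro l' hl' hxl
        have := (hP4 x).2 ⟨l', hl', hxl⟩
        simp at this
    rintro ⟨V₁, l₁, P₁⟩ h₁ ⟨V₂, l₂, P₂⟩ h₂ heq
    simp only [mem_sigma, mem_filter, mem_product, mem_perms, mem_partF] at h₁ h₂
    simp only at heq
    obtain ⟨a1, a2, a3⟩ := aux _ _ _ h₁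
    obtain ⟨b1, b2, b3⟩ := aux _ _ _ h₂
    have hl : l₁ = l₂ := by
      have : l₁ ∈ insert l₂ P₂ := by rw [← heq]; exact mem_insert_self _ _
      rcases mem_insert.1 this with h | h
      · exact h
      · exact absurd a1 (b3 _ h)
    subst hl
    have hP : P₁ = P₂ := by
      rw [← erase_insert (fun h => a3 _ h a1 : l₁ ∉ P₁), heq,
        erase_insert (fun h => b3 _ h b1 : l₁ ∉ P₂)]
    subst hP
    have hVV : V₁ = V₂ := a2.trans b2.symm
    subst hVV
    rfl
  · intro P hP
    rw [mem_partF] at hP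
    obtain ⟨hP1, hP2, hP3, hP4⟩ := hP
    obtain ⟨l, hl, hxl⟩ := (hP4 x).1 hx
    have hins : insert x (l.toFinset.erase x) = l.toFinset :=
      insert_erase (List.mem_toFinset.2 hxl)
    refine ⟨⟨l.toFinset.erase x, l, P.erase l⟩, ?_, ?_⟩
    · simp only [mem_sigma, mem_filter, mem_powerset, mem_product, mem_perms, mem_partF]
      refine ⟨⟨?_, ?_⟩, ⟨(hP2 l hl).1, hins.symm⟩, ?_, ?_, ?_, ?_⟩
      · apply erase_subset_erase
        intro z hz
        exact (hP4 z).2 ⟨l, hl, List.mem_toFinset.1 hz⟩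
      · rw [← card_pos, card_erase_of_mem (List.mem_toFinset.2 hxl),
          List.toFinset_card_of_nodup (hP2 l hl).1]
        have := (hP2 l hl).2
        omega
      · rw [card_erase_of_mem hl, hP1]; rfl
      · intro l' hl'
        exact hP2 l' (mem_of_mem_erase hl')
      · intro l₁ h₁ l₂ h₂
        exact hP3 l₁ (mem_of_mem_erase h₁) l₂ (mem_of_mem_erase h₂)
      · intro z
        simp only [mem_sdiff, mem_erase, List.mem_toFinset]
        constructor
        · rintro ⟨⟨hzx, hzU⟩, hz⟩
          obtain ⟨l', hl', h⟩ := (hP4 z).1 hzU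
          refine ⟨l', ⟨?_, hl'⟩, h⟩
          rintro rfl
          exact hz ⟨hzx, h⟩
        · rintro ⟨l', ⟨hne, hl'⟩, hz⟩
          have hzl : z ∉ l := hP3 l' hl' l hl hne z hz
          refine ⟨⟨?_, (hP4 z).2 ⟨l', hl', hz⟩⟩, fun h => hzl h.2⟩
          rintro rfl
          exact hzl hxl
    · exact insert_erase hl

lemma partF_formula (k : ℕ) (U : Finset ℕ) :
    (k.factorial : ℚ) * (partF U k).card = U.card.factorial * cc U.card k := by
  classical
  induction k generalizing U with
  | zero =>
    rw [cc_zero]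
    by_cases hU : U = ∅
    · subst hU
      have : partF ∅ 0 = {∅} := by
        ext P
        rw [mem_partF, mem_singleton]
        constructor
        · intro h; exact card_eq_zero.1 h.1
        · rintro rfl
          exact ⟨by simp, by simp, by simp, by simp⟩
      rw [this]; simp
    · have : partF U 0 = ∅ := by
        ext P
        simp only [mem_partF, notMem_empty, iff_false]
        intro h
        obtain ⟨x, hx⟩ := nonempty_iff_ne_empty.2 hU
        obtain ⟨l, hl, -⟩ := (h.2.2.2 x).1 hx
        rw [card_eq_zero.1 h.1] at hl
        simp at hl
      rw [this]; simp [hU]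
  | succ k ih =>
    by_cases hU : U = ∅
    · subst hU
      have : partF ∅ (k+1) = ∅ := by
        ext P
        simp only [mem_partF, notMem_empty, iff_false]
        intro h
        obtain ⟨l, hl⟩ : P.Nonempty := by rw [← card_pos, h.1]; omega
        have h2 := (h.2.1 l hl).2
        obtain ⟨y, hy⟩ := List.exists_mem_of_length_pos (l := l) (by omega)
        have := (h.2.2.2 y).2 ⟨l, hl, hy⟩
        simp at this
      rw [this, cc_eq_zero (by simp)]; simp
    obtain ⟨x, hx⟩ := nonempty_iff_ne_empty.2 hU
    obtain ⟨m, hm⟩ : ∃ m, U.card = m + 1 := ⟨U.card - 1, by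
      have := card_pos.2 ⟨x, hx⟩; omega⟩
    have hme : (U.erase x).card = m := by rw [card_erase_of_mem hx, hm]; rfl
    have hd := cc_deriv (m+1) k
    have hk : (k.factorial : ℚ) * (partF U (k+1)).card =
        m.factorial * ∑ x ∈ antidiagonal (m+1), (if 2 ≤ x.1 then (x.1:ℚ) else 0) * cc x.2 k := by
      rw [partF_rec U k x hx, Finset.sum_filter]
      push_cast
      rw [Finset.mul_sum]
      have e1 : ∀ V ∈ (U.erase x).powerset,
          (k.factorial : ℚ) * (if V.Nonempty then
            ((V.card + 1).factorial : ℚ) * (partF (U.erase x \ V) k).card else 0) =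
          (fun j => if 1 ≤ j then ((j+1).factorial : ℚ) * ((m-j).factorial * cc (m-j) k) else 0)
            V.card := by
        intro V hV
        have hc : (U.erase x \ V).card = m - V.card := by
          rw [card_sdiff_of_subset (mem_powerset.1 hV), hme]
        have := ih (U.erase x \ V)
        rw [hc] at this
        simp only [Nat.succ_le_iff, card_pos]
        split_ifs
        · rw [← this]; ring
        · simp
      rw [Finset.sum_congr rfl e1, Finset.sum_powerset_apply_card
          (fun j => if 1 ≤ j then ((j+1).factorial : ℚ) * ((m-j).factorial * cc (m-j) k) else 0),
        hme,
        Finset.Nat.sum_antidiagonal_eq_sum_range_succ_mk, Finset.sum_range_succ' _ (m+1),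
        mul_add, Finset.mul_sum]
      simp only [nsmul_eq_mul]
      rw [if_neg (by omega), zero_mul, mul_zero, add_zero]
      refine Finset.sum_congr rfl ?_
      intro j hj
      rw [mem_range] at hj
      have hfac : ((m.choose j : ℕ) : ℚ) * j.factorial * (m-j).factorial = m.factorial := by
        exact_mod_cast Nat.choose_mul_factorial_mul_factorial (by omega : j ≤ m)
      rw [show m + 1 - (j + 1) = m - j by omega]
      by_cases h1 : 1 ≤ j
      · rw [if_pos h1, if_pos (by omega), ← hfac, Nat.factorial_succ]
        push_cast
        ring
      · rw [if_neg h1, if_neg (by omega)]; simp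
    rw [hm, Nat.factorial_succ, Nat.factorial_succ]
    push_cast at hd ⊢
    rw [mul_assoc, hk, mul_right_comm, hd]
    ring

theorem stmt7_main (n k : ℕ) (hn : 2 ≤ n) (hk1 : 1 ≤ k) (hk : k ≤ n - 1) :
    Nonempty ({p : Equiv.Perm (Fin n) × Finset (Finset ℕ) // IsIntNested n k p.2} ≃
      {P : Finset (List ℕ) // IsIOPart (n + k - 1) k P}) := by
  classical
  have e1 : {p : Equiv.Perm (Fin n) × Finset (Finset ℕ) // IsIntNested n k p.2} ≃
      Equiv.Perm (Fin n) × {T // T ∈ fam n k 1} :=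
    (Equiv.mk (fun p => (p.1.1, ⟨p.1.2, p.2⟩)) (fun q => ⟨(q.1, q.2.1), q.2.2⟩)
      (fun _ => rfl) (fun _ => rfl) :
      {p : Equiv.Perm (Fin n) × Finset (Finset ℕ) // IsIntNested n k p.2} ≃
      Equiv.Perm (Fin n) × {S // IsIntNested n k S}).trans
    (Equiv.prodCongr (Equiv.refl _) (Equiv.ofBijective _ (nestedMap_bij n k hn)).symm)
  have e2 : {P : Finset (List ℕ) // IsIOPart (n + k - 1) k P} ≃
      {P // P ∈ partF (Icc 1 (n+k-1)) k} :=
    Equiv.subtypeEquivRight (fun P => by rw [mem_partF]; exact Iff.rfl)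
  have hcard : n.factorial * (fam n k 1).card = (partF (Icc 1 (n+k-1)) k).card := by
    have f1 := fam_formula k n 1 (by omega)
    have f2 := partF_formula k (Icc 1 (n+k-1))
    rw [Nat.card_Icc, Nat.add_sub_cancel] at f2
    have f3 : (((n+k).choose k : ℕ) : ℚ) * n.factorial * k.factorial =
        ((n+k : ℕ) : ℚ) * (n+k-1).factorial := by
      have h1 := Nat.add_choose_mul_factorial_mul_factorial n k
      have h2 := Nat.mul_factorial_pred (n := n + k) (by omega)
      exact_mod_cast h1.trans h2.symm
    have hp1 : ((n+k:ℕ):ℚ) ≠ 0 := by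
      have : n + k ≠ 0 := by omega
      exact_mod_cast this
    have hp2 : (k.factorial : ℚ) ≠ 0 := by exact_mod_cast Nat.factorial_ne_zero k
    have : ((n.factorial * (fam n k 1).card : ℕ) : ℚ) = (partF (Icc 1 (n+k-1)) k).card := by
      apply mul_left_cancel₀ hp2
      apply mul_left_cancel₀ hp1
      rw [f2]
      push_cast at f1 f3 ⊢
      calc ((n:ℚ)+k) * (k.factorial * (n.factorial * (fam n k 1).card))
          = (k.factorial * n.factorial) * (((n:ℚ)+k) * (fam n k 1).card) := by ring
        _ = ((n+k).choose k * n.factorial * k.factorial) * cc (n+k-1) k := by rw [f1]; ring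
        _ = _ := by rw [f3]; ring
    exact_mod_cast this
  refine ⟨e1.trans (Equiv.trans (Fintype.equivOfCardEq ?_) e2.symm)⟩
  rw [Fintype.card_prod, Fintype.card_perm, Fintype.card_fin, Fintype.card_coe, Fintype.card_coe,
    hcard]

end NestedCount

/-- `OS₂((1,...,n),k)`, the disjoint union over all permutations `σ` of `{1,...,n}`
of the parenthesizations with `k` couples of parentheses of the permuted list, is
in bijection with the admissible internally ordered `k`-partitions of `{1,...,n+k-1}`. -/
theorem stmt7 (n k : ℕ) (hn : 2 ≤ n) (hk1 : 1 ≤ k) (hk : k ≤ n - 1) :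
    Nonempty ({p : Equiv.Perm (Fin n) × Finset (Finset ℕ) // IsIntNested n k p.2} ≃
      {P : Finset (List ℕ) // IsIOPart (n + k - 1) k P}) := 
  stmt7_main n k hn hk1 hk
end

section
/- For integers n ≥ 2 and 1 ≤ k ≤ n-1, the number of families of k intervals of {1,...,n}, each of cardinality ≥ 2, containing the full interval {1,...,n}, and such that any two intervals in the family are nested or disjoint, equals (1/k) · C(n-2, k-1) · C(n+k-1, k-1). -/
namespace KC

open Finset

/-- families of pairs coding laminar families of intervals -/
def IsFam (n : ℕ) (S : Finset (ℕ × ℕ)) : Prop :=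
  (∀ p ∈ S, 1 ≤ p.1 ∧ p.1 < p.2 ∧ p.2 ≤ n) ∧
  (∀ p ∈ S, ∀ q ∈ S, ¬ (p.1 < q.1 ∧ q.1 ≤ p.2 ∧ p.2 < q.2))

open scoped Classical in
/-- all families on `{1..n}` -/
noncomputable def Fam (n : ℕ) : Finset (Finset (ℕ × ℕ)) :=
  ((Icc 1 n ×ˢ Icc 1 n).powerset).filter (fun S => IsFam n S)

lemma mem_Fam (n : ℕ) (S : Finset (ℕ × ℕ)) : S ∈ Fam n ↔ IsFam n S := by
  classical
  unfold Fam
  rw [mem_filter, mem_powerset, and_iff_right_iff_imp]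
  intro h p hp
  have := h.1 p hp
  simp only [mem_product, mem_Icc]
  omega

/-- left ends of the maximal blocks -/
def starts (n : ℕ) (S : Finset (ℕ × ℕ)) : Finset ℕ :=
  (Icc 1 n).filter (fun i => ∀ p ∈ S, ¬ (p.1 < i ∧ i ≤ p.2))

lemma mem_starts {n : ℕ} {S : Finset (ℕ × ℕ)} {i : ℕ} :
    i ∈ starts n S ↔ (1 ≤ i ∧ i ≤ n) ∧ ∀ p ∈ S, ¬ (p.1 < i ∧ i ≤ p.2) := by
  simp only [starts, mem_filter, mem_Icc]

/-- number of families with `k` intervals and `m` blocks -/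
noncomputable def A (n k m : ℕ) : ℕ :=
  ((Fam n).filter (fun S => S.card = k ∧ (starts n S).card = m)).card

/-- number of families with `k` intervals and more than `m` blocks -/
noncomputable def B (n k m : ℕ) : ℕ :=
  ((Fam n).filter (fun S => S.card = k ∧ m < (starts n S).card)).card

lemma starts_card_le (n : ℕ) (S : Finset (ℕ × ℕ)) : (starts n S).card ≤ n := by
  refine (card_filter_le _ _).trans ?_
  simp

lemma starts_empty (n : ℕ) : starts n ∅ = Icc 1 n := by
  ext i; simp [mem_starts]

lemma starts_card_lt {n : ℕ} {S : Finset (ℕ × ℕ)} (h : IsFam n S) (h0 : S.Nonempty) :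
    (starts n S).card < n := by
  obtain ⟨p, hp⟩ := h0
  have h1 := h.1 p hp
  have : starts n S ⊂ Icc 1 n := by
    refine ⟨filter_subset _ _, fun hh => ?_⟩
    have h2 : p.2 ∈ starts n S := hh (by rw [mem_Icc]; omega)
    exact (mem_starts.1 h2).2 p hp ⟨h1.2.1, le_rfl⟩
  simpa using card_lt_card this

lemma B_split (n k m : ℕ) : B n k m = A n k (m + 1) + B n k (m + 1) := by
  unfold A B
  rw [← card_union_of_disjoint]
  · congr 1
    ext S
    simp only [mem_union, mem_filter]
    constructor
    · rintro ⟨h1, h2, h3⟩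
      by_cases h : (starts n S).card = m + 1
      · exact Or.inl ⟨h1, h2, h⟩
      · exact Or.inr ⟨h1, h2, by omega⟩
    · rintro (⟨h1, h2, h3⟩ | ⟨h1, h2, h3⟩)
      · exact ⟨h1, h2, by omega⟩
      · exact ⟨h1, h2, by omega⟩
  · rw [disjoint_left]
    intro S hS hS'
    simp only [mem_filter] at hS hS'
    omega

lemma A_zero_of_le {n k m : ℕ} (h : n ≤ m) : A n (k + 1) m = 0 := by
  unfold A
  rw [card_eq_zero, filter_eq_empty_iff]
  rintro S hS ⟨h1, h2⟩
  have := starts_card_lt ((mem_Fam _ _).1 hS) (card_pos.1 (by omega))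
  omega

lemma B_zero_of_le {n k m : ℕ} (h : n ≤ m) : B n k m = 0 := by
  unfold B
  rw [card_eq_zero, filter_eq_empty_iff]
  rintro S hS ⟨h1, h2⟩
  have := starts_card_le n S
  omega

lemma B_zero {n m : ℕ} (h : m < n) : B n 0 m = 1 := by
  unfold B
  rw [card_eq_one]
  refine ⟨∅, ?_⟩
  ext S
  simp only [mem_filter, mem_singleton, card_eq_zero, mem_Fam]
  constructor
  · rintro ⟨-, h, -⟩; exact h
  · rintro rfl
    refine ⟨⟨by simp, by simp⟩, rfl, ?_⟩
    rw [starts_empty]; simpa using h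

lemma one_mem_starts {n : ℕ} (hn : 1 ≤ n) {S : Finset (ℕ × ℕ)} (h : IsFam n S) :
    1 ∈ starts n S := by
  rw [mem_starts]
  refine ⟨⟨le_rfl, hn⟩, fun p hp => ?_⟩
  have := h.1 p hp
  omega

lemma A_m_zero (n k : ℕ) : A (n + 1) k 0 = 0 := by
  unfold A
  rw [card_eq_zero, filter_eq_empty_iff]
  rintro S hS ⟨h1, h2⟩
  have := one_mem_starts (by omega) ((mem_Fam _ _).1 hS)
  rw [card_eq_zero] at h2
  simp [h2] at this

lemma exists_start {n : ℕ} {S : Finset (ℕ × ℕ)} (h : IsFam n S)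
    (he : ∃ a, (a, n) ∈ S) : ∃ a, (a, n) ∈ S ∧ a ∈ starts n S := by
  classical
  refine ⟨Nat.find he, Nat.find_spec he, ?_⟩
  have hs := Nat.find_spec he
  have hm : ∀ b, (b, n) ∈ S → Nat.find he ≤ b := fun b hb => Nat.find_min' he hb
  generalize Nat.find he = a at hs hm
  have h1 := h.1 _ hs
  simp only at h1
  rw [mem_starts]
  refine ⟨by omega, ?_⟩
  rintro ⟨c, d⟩ hp hcd
  simp only at hcd
  have h2 := h.1 _ hp
  simp only at h2
  by_cases hd : d = n
  · subst hd
    have := hm _ hp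
    omega
  · exact h.2 _ hp _ hs (by simp only; omega)

lemma n_mem_starts {n : ℕ} (hn : 1 ≤ n) {S : Finset (ℕ × ℕ)} (h : IsFam n S)
    (he : ¬ ∃ a, (a, n) ∈ S) : n ∈ starts n S := by
  rw [mem_starts]
  refine ⟨by omega, ?_⟩
  rintro ⟨c, d⟩ hp hcd
  have h2 := h.1 _ hp
  simp only at h2 hcd
  have : d = n := by omega
  subst this
  exact he ⟨_, hp⟩

lemma starts_insert (n i : ℕ) (S : Finset (ℕ × ℕ)) :
    starts n (insert (i, n) S) = (starts n S).filter (fun s => s ≤ i) := by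
  ext s
  simp only [mem_filter, mem_starts, mem_insert, forall_eq_or_imp]
  constructor
  · rintro ⟨h1, h2, h3⟩
    exact ⟨⟨h1, h3⟩, by omega⟩
  · rintro ⟨⟨h1, h3⟩, h2⟩
    exact ⟨h1, by omega, h3⟩

lemma exists_rank (T : Finset ℕ) : ∀ m, m < T.card →
    ∃ i ∈ T, (T.filter (fun s => s ≤ i)).card = m + 1 := by
  induction T using Finset.induction_on_max with
  | empty => simp
  | insert a T ha ih =>
    intro m hm
    have haT : a ∉ T := fun h => lt_irrefl _ (ha a h)
    rw [card_insert_of_notMem haT] at hm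
    by_cases h : m < T.card
    · obtain ⟨i, hi, hc⟩ := ih m h
      refine ⟨i, mem_insert_of_mem hi, ?_⟩
      rw [filter_insert, if_neg (by have := ha i hi; omega), hc]
    · refine ⟨a, mem_insert_self _ _, ?_⟩
      rw [filter_true_of_mem, card_insert_of_notMem haT]
      · omega
      · intro x hx
        rcases mem_insert.1 hx with rfl | hx
        · exact le_rfl
        · exact (ha x hx).le

lemma rank_unique {T : Finset ℕ} {i j : ℕ} (hi : i ∈ T) (hj : j ∈ T)
    (h : (T.filter (fun s => s ≤ i)).card = (T.filter (fun s => s ≤ j)).card) : i = j := by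
  by_contra hne
  wlog hlt : i < j generalizing i j
  · exact this hj hi h.symm (Ne.symm hne) (by omega)
  have : T.filter (fun s => s ≤ i) ⊂ T.filter (fun s => s ≤ j) := by
    refine ⟨fun x hx => ?_, fun hh => ?_⟩
    · rw [mem_filter] at hx ⊢
      exact ⟨hx.1, by omega⟩
    · have := hh (mem_filter.2 ⟨hj, le_rfl⟩)
      rw [mem_filter] at this
      omega
  have := card_lt_card this
  omega

lemma exists_later {T : Finset ℕ} {i m : ℕ} (h : (T.filter (fun s => s ≤ i)).card = m)
    (hm : m < T.card) : ∃ t ∈ T, i < t := by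
  by_contra hh
  push Not at hh
  rw [filter_true_of_mem hh] at h
  omega

open scoped Classical in
/-- the families with an interval ending at `n` -/
lemma card_end (n k m : ℕ) :
    ((Fam n).filter (fun S : Finset (ℕ × ℕ) => (S.card = k + 1 ∧ (starts n S).card = m + 1) ∧
      ∃ a, (a, n) ∈ S)).card = B n k (m + 1) := by
  classical
  unfold B
  symm
  have hex : ∀ S ∈ (Fam n).filter (fun S => S.card = k ∧ m + 1 < (starts n S).card),
      ∃ i ∈ starts n S, ((starts n S).filter (fun s => s ≤ i)).card = m + 1 := by
    intro S hS
    rw [mem_filter] at hS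
    exact exists_rank _ m (by omega)
  choose σ hσ hσc using hex
  have hnot : ∀ S hS, (σ S hS, n) ∉ S ∧ σ S hS < n := by
    intro S hS
    have hc := (mem_filter.1 hS).2.2
    obtain ⟨t, ht, hlt⟩ := exists_later (hσc S hS) hc
    rw [mem_starts] at ht
    exact ⟨fun hh => ht.2 _ hh ⟨hlt, ht.1.2⟩, by omega⟩
  refine card_bij (fun S hS => insert (σ S hS, n) S) ?_ ?_ ?_
  · intro S hS
    have hS' := hS
    rw [mem_filter, mem_Fam] at hS'
    obtain ⟨hF, hc, -⟩ := hS'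
    have hn := hnot S hS
    have h1 := hσ S hS
    have h2 := hσc S hS
    generalize σ S hS = i at hn h1 h2
    rw [mem_filter, mem_Fam]
    refine ⟨⟨?_, ?_⟩, ⟨?_, ?_⟩, i, mem_insert_self _ _⟩
    · intro p hp
      rcases mem_insert.1 hp with rfl | hp
      · have := (mem_starts.1 h1).1
        simp only; omega
      · exact hF.1 p hp
    · intro p hp q hq hpq
      rcases mem_insert.1 hp with rfl | hp
      · rcases mem_insert.1 hq with rfl | hq
        · omega
        · have := hF.1 q hq
          simp only at hpq; omega
      · rcases mem_insert.1 hq with rfl | hq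
        · exact (mem_starts.1 h1).2 p hp ⟨hpq.1, hpq.2.1⟩
        · exact hF.2 p hp q hq hpq
    · rw [card_insert_of_notMem hn.1, hc]
    · rw [starts_insert, h2]
  · intro S hS S' hS' heq
    have hn := hnot S hS
    have h1 := hσ S hS
    have hn' := hnot S' hS'
    have h1' := hσ S' hS'
    generalize σ S hS = i at hn h1 heq
    generalize σ S' hS' = j at hn' h1' heq
    have hs := congrArg (starts n) heq
    rw [starts_insert, starts_insert] at hs
    have ha : i ∈ (starts n S').filter (fun s => s ≤ j) := by
      rw [← hs, mem_filter]; exact ⟨h1, le_rfl⟩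
    have hb : j ∈ (starts n S).filter (fun s => s ≤ i) := by
      rw [hs, mem_filter]; exact ⟨h1', le_rfl⟩
    rw [mem_filter] at ha hb
    have hij : i = j := by omega
    subst hij
    rw [← erase_insert hn.1, heq, erase_insert hn'.1]
  · intro S hS
    rw [mem_filter, mem_Fam] at hS
    obtain ⟨hF, ⟨hc, hm⟩, he⟩ := hS
    obtain ⟨i, hi, his⟩ := exists_start hF he
    have hins : insert (i, n) (S.erase (i, n)) = S := insert_erase hi
    have hF' : IsFam n (S.erase (i, n)) :=
      ⟨fun p hp => hF.1 p (mem_of_mem_erase hp),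
        fun p hp q hq => hF.2 p (mem_of_mem_erase hp) q (mem_of_mem_erase hq)⟩
    have hst := starts_insert n i (S.erase (i, n))
    rw [hins] at hst
    have hlt : i < n := (hF.1 _ hi).2.1
    have hlater : ∃ t ∈ starts n (S.erase (i, n)), i < t := by
      by_cases h : ∃ a, (a, n) ∈ S.erase (i, n)
      · obtain ⟨a, ha, has⟩ := exists_start hF' h
        refine ⟨a, has, ?_⟩
        have hne : a ≠ i := by
          rintro rfl
          simp at ha
        have := (mem_starts.1 his).2 _ (mem_of_mem_erase ha)
        simp only at this
        omega
      · exact ⟨n, n_mem_starts (by omega) hF' h, hlt⟩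
    have hmem : S.erase (i, n) ∈
        (Fam n).filter (fun S => S.card = k ∧ m + 1 < (starts n S).card) := by
      rw [mem_filter, mem_Fam]
      refine ⟨hF', ?_, ?_⟩
      · rw [card_erase_of_mem hi, hc]; rfl
      · rw [← hm]
        apply card_lt_card
        rw [hst]
        refine ⟨filter_subset _ _, fun hh => ?_⟩
        obtain ⟨t, ht, hit⟩ := hlater
        have := (mem_filter.1 (hh ht)).2
        omega
    refine ⟨S.erase (i, n), hmem, ?_⟩
    have : σ _ hmem = i := by
      refine rank_unique (hσ _ hmem) (T := starts n (S.erase (i, n))) ?_ ?_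
      · rw [hst] at his
        exact (mem_filter.1 his).1
      · rw [hσc, ← hst, hm]
    simp only [this]
    exact hins

open scoped Classical in
lemma card_noend (n k m : ℕ) :
    ((Fam (n + 1)).filter (fun S : Finset (ℕ × ℕ) => (S.card = k ∧ (starts (n + 1) S).card = m + 1) ∧
      ¬ ∃ a, (a, n + 1) ∈ S)).card = A n k m := by
  unfold A
  congr 1
  have key : ∀ S, IsFam n S → (starts (n + 1) S).card = (starts n S).card + 1 := by
    intro S h
    have : starts (n + 1) S = insert (n + 1) (starts n S) := by
      ext i
      simp only [mem_insert, mem_starts]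
      constructor
      · rintro ⟨h1, h2⟩
        by_cases hi : i = n + 1
        · exact Or.inl hi
        · exact Or.inr ⟨by omega, h2⟩
      · rintro (rfl | ⟨h1, h2⟩)
        · refine ⟨by omega, fun p hp => ?_⟩
          have := h.1 p hp
          omega
        · exact ⟨by omega, h2⟩
    rw [this, card_insert_of_notMem]
    intro hh
    have := (mem_starts.1 hh).1
    omega
  ext S
  simp only [mem_filter, mem_Fam]
  constructor
  · rintro ⟨hF, ⟨h1, h2⟩, h3⟩
    have hF' : IsFam n S := by
      refine ⟨fun p hp => ?_, hF.2⟩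
      have := hF.1 p hp
      refine ⟨this.1, this.2.1, ?_⟩
      by_contra hh
      refine h3 ⟨p.1, ?_⟩
      have : p.2 = n + 1 := by omega
      rw [← this]; exact hp
    rw [key S hF'] at h2
    exact ⟨hF', h1, by omega⟩
  · rintro ⟨hF, h1, h2⟩
    refine ⟨⟨fun p hp => ?_, hF.2⟩, ⟨h1, by rw [key S hF, h2]⟩, ?_⟩
    · have := hF.1 p hp
      omega
    · rintro ⟨a, ha⟩
      have := hF.1 _ ha
      simp only at this
      omega

lemma A_rec (n k m : ℕ) :
    A (n + 1) (k + 1) (m + 1) = A n (k + 1) m + B (n + 1) k (m + 1) := by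
  classical
  rw [← card_noend n (k + 1) m, ← card_end (n + 1) k m]
  rw [A, ← card_filter_add_card_filter_not (fun S : Finset (ℕ × ℕ) => ∃ a, (a, n + 1) ∈ S),
    filter_filter, filter_filter, add_comm]

lemma choose_aux (j e m : ℕ) :
    (j + 2) * (m + 1) * e.choose j + ((j + 1) * (m + 1) + (e + m + 2)) * e.choose (j + 1)
      = ((j + 1) * m + (e + m + 2)) * (e + 1).choose (j + 1) := by
  rw [Nat.choose_succ_succ]
  have h := Nat.choose_succ_right_eq e j
  rcases Nat.lt_or_ge e j with hlt | hge
  · rw [Nat.choose_eq_zero_of_lt hlt, Nat.choose_eq_zero_of_lt (by omega : e < j + 1)]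
    simp
  · obtain ⟨d, rfl⟩ := Nat.exists_eq_add_of_le hge
    rw [Nat.add_sub_cancel_left] at h
    simp only [Nat.succ_eq_add_one] at *
    generalize (j + d).choose j = x at *
    generalize (j + d).choose (j + 1) = y at *
    nlinarith

lemma B_formula (j : ℕ)
    (hA : ∀ n m, m < n → A n (j + 1) m * (n.factorial * (j + 1).factorial)
      = m * (n + j).factorial * (n - m - 1).choose j) (e : ℕ) :
    ∀ m, B (m + e + 1) (j + 1) m * ((m + e + 1).factorial * (j + 2).factorial)
      = (m + e + 1 + j).factorial * ((j + 1) * m + (m + e + 1)) * e.choose (j + 1) := by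
  induction e with
  | zero =>
    intro m
    rw [B_split, A_zero_of_le (by omega), B_zero_of_le (by omega)]
    simp
  | succ e ih =>
    intro m
    rw [B_split]
    have h1 := ih (m + 1)
    have h2 := hA (m + (e + 1) + 1) (m + 1) (by omega)
    have e1 : m + 1 + e + 1 = m + (e + 1) + 1 := by ring
    rw [e1] at h1
    have e2 : m + (e + 1) + 1 - (m + 1) - 1 = e := by omega
    rw [e2] at h2
    have h3 := choose_aux j e m
    have e3 : (j + 2).factorial = (j + 2) * (j + 1).factorial := Nat.factorial_succ _
    rw [add_mul, h1, e3]
    calc _ = (j + 2) * (A (m + (e + 1) + 1) (j + 1) (m + 1) *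
          ((m + (e + 1) + 1).factorial * (j + 1).factorial)) + _ := by
            congr 1; ring
      _ = _ := by
        rw [h2]
        have e4 : m + (e + 1) + 1 = e + m + 2 := by ring
        rw [e4]
        calc _ = (e + m + 2 + j).factorial * ((j + 2) * (m + 1) * e.choose j +
              ((j + 1) * (m + 1) + (e + m + 2)) * e.choose (j + 1)) := by ring
          _ = _ := by rw [h3]; ring

lemma A_step (k : ℕ)
    (hB : ∀ n m, m + 1 < n + 1 → B (n + 1) k (m + 1) * ((n + 1).factorial * (k + 1).factorial)
      = (n + k).factorial * (k * (m + 1) + (n + 1)) * (n - m - 1).choose k) (n : ℕ) :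
    ∀ m, m < n → A n (k + 1) m * (n.factorial * (k + 1).factorial)
      = m * (n + k).factorial * (n - m - 1).choose k := by
  induction n with
  | zero => intro m hm; omega
  | succ n ih =>
    intro m hm
    cases m with
    | zero => rw [A_m_zero]; simp
    | succ m =>
      have h1 := ih m (by omega)
      have h2 := hB n m hm
      have e2 : n + 1 - (m + 1) - 1 = n - m - 1 := by omega
      rw [A_rec, add_mul, h2, e2]
      have e3 : (n + 1).factorial = (n + 1) * n.factorial := Nat.factorial_succ _
      have e4 : (n + 1 + k).factorial = (n + k + 1) * (n + k).factorial := by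
        rw [← Nat.factorial_succ]; congr 1; ring
      rw [e3, e4]
      calc _ = (n + 1) * (A n (k + 1) m * (n.factorial * (k + 1).factorial)) + _ := by
              congr 1; ring
        _ = _ := by rw [h1]; ring

lemma A_formula (k : ℕ) : ∀ n m, m < n → A n (k + 1) m * (n.factorial * (k + 1).factorial)
      = m * (n + k).factorial * (n - m - 1).choose k := by
  induction k with
  | zero =>
    refine A_step 0 ?_
    intro n m hm
    rw [B_zero hm, Nat.factorial_succ]
    simp
    ring
  | succ j ih =>
    refine A_step (j + 1) ?_
    intro n m hm
    have h := B_formula j ih (n - m - 1) (m + 1)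
    have e1 : m + 1 + (n - m - 1) + 1 = n + 1 := by omega
    rw [e1] at h
    rw [h]
    congr 3
    ring

lemma one_iff {n : ℕ} (hn : 2 ≤ n) {S : Finset (ℕ × ℕ)} (h : IsFam n S) :
    (1, n) ∈ S ↔ (starts n S).card = 1 := by
  have h1 := one_mem_starts (by omega) h
  constructor
  · intro hS
    rw [card_eq_one]
    refine ⟨1, ?_⟩
    ext i
    rw [mem_singleton]
    constructor
    · intro hi
      rw [mem_starts] at hi
      have := hi.2 _ hS
      simp only at this
      omega
    · rintro rfl; exact h1
  · intro hc
    obtain ⟨x, hx⟩ := card_eq_one.1 hc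
    rw [hx, mem_singleton] at h1
    subst h1
    by_cases he : ∃ a, (a, n) ∈ S
    · obtain ⟨a, ha, has⟩ := exists_start h he
      rw [hx, mem_singleton] at has
      subst has
      exact ha
    · have := n_mem_starts (by omega) h he
      rw [hx, mem_singleton] at this
      omega

/-- the interval coded by a pair -/
def ivl (p : ℕ × ℕ) : Finset ℕ := Icc p.1 p.2

lemma ivl_inj {p q : ℕ × ℕ} (hp : p.1 < p.2) (hq : q.1 < q.2) (h : ivl p = ivl q) : p = q := by
  unfold ivl at h
  have h1 : p.1 ∈ Icc q.1 q.2 := h ▸ (mem_Icc.2 ⟨le_rfl, hp.le⟩)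
  have h2 : p.2 ∈ Icc q.1 q.2 := h ▸ (mem_Icc.2 ⟨hp.le, le_rfl⟩)
  have h3 : q.1 ∈ Icc p.1 p.2 := h ▸ (mem_Icc.2 ⟨le_rfl, hq.le⟩)
  have h4 : q.2 ∈ Icc p.1 p.2 := h ▸ (mem_Icc.2 ⟨hq.le, le_rfl⟩)
  rw [mem_Icc] at h1 h2 h3 h4
  ext <;> omega

lemma cross_iff {p q : ℕ × ℕ} (hp : p.1 < p.2) (hq : q.1 < q.2) :
    (ivl p ⊆ ivl q ∨ ivl q ⊆ ivl p ∨ Disjoint (ivl p) (ivl q)) ↔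
    (¬ (p.1 < q.1 ∧ q.1 ≤ p.2 ∧ p.2 < q.2) ∧ ¬ (q.1 < p.1 ∧ p.1 ≤ q.2 ∧ q.2 < p.2)) := by
  unfold ivl
  rw [Icc_subset_Icc_iff hp.le, Icc_subset_Icc_iff hq.le]
  have : Disjoint (Icc p.1 p.2) (Icc q.1 q.2) ↔ (p.2 < q.1 ∨ q.2 < p.1) := by
    rw [disjoint_left]
    constructor
    · intro h
      by_contra hh
      have := @h (max p.1 q.1) (by rw [mem_Icc]; omega)
      rw [mem_Icc] at this
      omega
    · intro h x hx hx'
      rw [mem_Icc] at hx hx'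
      omega
  rw [this]
  omega

lemma count_eq (n k : ℕ) (hn : 2 ≤ n) :
    Nat.card {S : Finset (Finset ℕ) // IsIntNested n k S} = A n k 1 := by
  classical
  unfold A
  rw [← card_image_of_injOn (f := fun S : Finset (ℕ × ℕ) => S.image ivl)]
  · refine Nat.subtype_card _ ?_
    intro T
    simp only [mem_image, mem_filter, mem_Fam]
    constructor
    · rintro ⟨S, ⟨hF, hc, hs⟩, rfl⟩
      rw [← one_iff hn hF] at hs
      refine ⟨?_, ?_, ?_, ?_⟩
      · rw [card_image_of_injOn, hc]
        intro p hp q hq h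
        exact ivl_inj (hF.1 p hp).2.1 (hF.1 q hq).2.1 h
      · exact mem_image.2 ⟨_, hs, rfl⟩
      · intro I hI
        obtain ⟨p, hp, rfl⟩ := mem_image.1 hI
        have := hF.1 p hp
        refine ⟨?_, p.1, p.2, this.1, this.2.1.le, this.2.2, rfl⟩
        simp only [ivl, Nat.card_Icc]
        omega
      · intro I hI J hJ
        obtain ⟨p, hp, rfl⟩ := mem_image.1 hI
        obtain ⟨q, hq, rfl⟩ := mem_image.1 hJ
        rw [cross_iff (hF.1 p hp).2.1 (hF.1 q hq).2.1]
        exact ⟨hF.2 p hp q hq, hF.2 q hq p hp⟩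
    · rintro ⟨hc, hfull, hint, hnest⟩
      let S : Finset (ℕ × ℕ) :=
        (Icc 1 n ×ˢ Icc 1 n).filter (fun p => p.1 < p.2 ∧ ivl p ∈ T)
      have hmem : ∀ p, p ∈ S ↔ (1 ≤ p.1 ∧ p.1 < p.2 ∧ p.2 ≤ n) ∧ ivl p ∈ T := by
        intro p
        simp only [S, mem_filter, mem_product, mem_Icc]
        constructor
        · rintro ⟨h1, h2, h3⟩
          exact ⟨by omega, h3⟩
        · rintro ⟨h1, h3⟩
          exact ⟨by omega, by omega, h3⟩
      have hF : IsFam n S := by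
        refine ⟨fun p hp => ((hmem p).1 hp).1, fun p hp q hq => ?_⟩
        have hp' := (hmem p).1 hp
        have hq' := (hmem q).1 hq
        exact ((cross_iff hp'.1.2.1 hq'.1.2.1).1 (hnest _ hp'.2 _ hq'.2)).1
      have him : S.image ivl = T := by
        ext I
        rw [mem_image]
        constructor
        · rintro ⟨p, hp, rfl⟩
          exact ((hmem p).1 hp).2
        · intro hI
          obtain ⟨h2, i, j, h1i, hij, hjn, rfl⟩ := hint I hI
          rw [Nat.card_Icc] at h2
          exact ⟨(i, j), (hmem _).2 ⟨⟨h1i, by simp only; omega, hjn⟩, hI⟩, rfl⟩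
      refine ⟨S, ⟨hF, ?_, ?_⟩, him⟩
      · rw [← hc, ← him, card_image_of_injOn]
        intro p hp q hq h
        exact ivl_inj (hF.1 p hp).2.1 (hF.1 q hq).2.1 h
      · rw [← one_iff hn hF, hmem]
        exact ⟨⟨le_rfl, by simp only; omega, le_rfl⟩, hfull⟩
  · have key : ∀ S S' : Finset (ℕ × ℕ), IsFam n S → IsFam n S' →
        S.image ivl = S'.image ivl → S ⊆ S' := by
      intro S S' h h' he p hp
      have : ivl p ∈ S'.image ivl := he ▸ mem_image_of_mem _ hp
      obtain ⟨q, hq, hqp⟩ := mem_image.1 this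
      rw [← ivl_inj (h'.1 q hq).2.1 (h.1 p hp).2.1 hqp]
      exact hq
    intro S hS S' hS' he
    have hS := (mem_Fam _ _).1 (mem_filter.1 (mem_coe.1 hS)).1
    have hS' := (mem_Fam _ _).1 (mem_filter.1 (mem_coe.1 hS')).1
    exact Subset.antisymm (key _ _ hS hS' he) (key _ _ hS' hS he.symm)

end KC

/-- The number of such families is `(1/k) · C(n-2,k-1) · C(n+k-1,k-1)`
(stated multiplicatively), the Kirkman–Cayley number `D_{n+1,k-1}`. -/
theorem stmt9 (n k : ℕ) (hn : 2 ≤ n) (hk1 : 1 ≤ k) (hk : k ≤ n - 1) :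
    k * Nat.card {S : Finset (Finset ℕ) // IsIntNested n k S} =
      (n - 2).choose (k - 1) * (n + k - 1).choose (k - 1) := by
  rw [KC.count_eq n k hn]
  obtain ⟨j, rfl⟩ : ∃ j, k = j + 1 := ⟨k - 1, by omega⟩
  have h := KC.A_formula j n 1 (by omega)
  have h2 := Nat.add_choose_mul_factorial_mul_factorial n j
  have h3 : (n + j).choose n = (n + j).choose j := Nat.choose_symm_add
  have e1 : n - 1 - 1 = n - 2 := by omega
  have e2 : n + (j + 1) - 1 = n + j := by omega
  have e3 : j + 1 - 1 = j := by omega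
  rw [e1, ← h2, Nat.factorial_succ j] at h
  rw [e2, e3]
  have hpos : 0 < n.factorial * j.factorial :=
    Nat.mul_pos (Nat.factorial_pos _) (Nat.factorial_pos _)
  apply Nat.eq_of_mul_eq_mul_right hpos
  linarith
end

section
/- Let n ≥ 2, 1 ≤ k ≤ n-1, and let (i₁^{m₁},...,i_s^{m_s}) with 3 ≤ i₁ < ... < i_s satisfy Σ m_j = k and Σ i_j m_j = n + 2k - 1. Then the number of dissections of a convex polygon with n+1 labelled edges by k-1 noncrossing diagonals of type (i₁^{m₁},...,i_s^{m_s}) equals (n+k-1)! / (n! · m₁! · m₂! ⋯ m_s!). -/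
/-- The children of `A` in the rooted tree associated with `S`; the cell of the
dissection corresponding to `A ∈ S` has `(children n S A).card + 1` edges. -/
def children (n : ℕ) (S : Finset (Finset ℕ)) (A : Finset ℕ) : Finset (Finset ℕ) :=
  (S ∪ (Finset.Icc 1 n).image (fun x => ({x} : Finset ℕ))).filter
    (fun B => B ⊂ A ∧ ∀ C ∈ S, B ⊂ C → ¬ C ⊂ A)

namespace Dissect
open Finset

def Lam (a b : ℕ) (S : Finset (Finset ℕ)) : Prop :=
  (∀ A ∈ S, ∃ p q, a ≤ p ∧ p < q ∧ q ≤ b ∧ A = Finset.Icc p q) ∧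
  (∀ A ∈ S, ∀ B ∈ S, A ⊆ B ∨ B ⊆ A ∨ Disjoint A B)

/-- right ends of the maximal blocks -/
def cuts (a b : ℕ) (S : Finset (Finset ℕ)) : Finset ℕ :=
  (Finset.Icc a b).filter (fun x => ∀ C ∈ S, x ∈ C → x + 1 ∉ C)

/-- right ends of the children of `A` -/
def chc (S : Finset (Finset ℕ)) (A : Finset ℕ) : Finset ℕ :=
  A.filter (fun x => ∀ C ∈ S, C ⊂ A → x ∈ C → x + 1 ∉ C)

def tp (S : Finset (Finset ℕ)) : Multiset ℕ := S.val.map (fun A => (chc S A).card)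

open Classical in
noncomputable def F (a b r : ℕ) (μ : Multiset ℕ) : Finset (Finset (Finset ℕ)) :=
  ((Finset.Icc a b).powerset.powerset).filter
    (fun S => Lam a b S ∧ (cuts a b S).card = r ∧ tp S = μ)

theorem mem_F {a b r : ℕ} {μ : Multiset ℕ} {S : Finset (Finset ℕ)} :
    S ∈ F a b r μ ↔ Lam a b S ∧ (cuts a b S).card = r ∧ tp S = μ := by
  classical
  unfold F
  rw [Finset.mem_filter]
  constructor
  · exact fun h => h.2
  · intro h
    refine ⟨?_, h⟩
    rw [Finset.mem_powerset]
    intro A hA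
    rw [Finset.mem_powerset]
    obtain ⟨p, q, h1, h2, h3, rfl⟩ := h.1.1 A hA
    exact Finset.Icc_subset_Icc h1 h3

def Top (a : ℕ) (S : Finset (Finset ℕ)) (j : ℕ) : Prop :=
  Finset.Icc a j ∈ S ∧ ∀ C ∈ S, a ∈ C → C ⊆ Finset.Icc a j

theorem exists_top {a b : ℕ} {S : Finset (Finset ℕ)} (hS : Lam a b S)
    (h : ∃ A ∈ S, a ∈ A) : ∃ j, a < j ∧ j ≤ b ∧ Top a S j := by
  obtain ⟨A, hA, haA⟩ := h
  obtain ⟨M, hM, hmax⟩ := Finset.exists_max_image (S.filter (fun A => a ∈ A)) Finset.card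
    ⟨A, by simp [hA, haA]⟩
  rw [Finset.mem_filter] at hM
  obtain ⟨p, q, h1, h2, h3, rfl⟩ := hS.1 M hM.1
  have hp : p = a := by
    have := Finset.mem_Icc.1 hM.2
    omega
  subst hp
  refine ⟨q, h2, h3, hM.1, ?_⟩
  intro C hC haC
  rcases hS.2 C hC _ hM.1 with h | h | h
  · exact h
  · have := hmax C (by simp [hC, haC])
    rw [Finset.eq_of_subset_of_card_le h this]
  · exact absurd hM.2 (Finset.disjoint_left.1 h haC)

theorem top_unique {a : ℕ} {S : Finset (Finset ℕ)} {j j' : ℕ} (hj : a ≤ j) (hj' : a ≤ j')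
    (h : Top a S j) (h' : Top a S j') : j = j' := by
  have h1 := h.2 _ h'.1 (by simp [hj'])
  have h2 := h'.2 _ h.1 (by simp [hj])
  have h3 := h1 (Finset.mem_Icc.2 ⟨hj', le_rfl⟩)
  have h4 := h2 (Finset.mem_Icc.2 ⟨hj, le_rfl⟩)
  rw [Finset.mem_Icc] at h3 h4
  omega

/-- Core facts on adding a top interval. -/
theorem core {a b j : ℕ} {S : Finset (Finset ℕ)} (hS : Lam a b S) (haj : a < j) (hjb : j ≤ b)
    (hT : Top a S j) :
    j ∈ cuts a b (S.erase (Finset.Icc a j)) ∧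
    cuts a b S = (cuts a b (S.erase (Finset.Icc a j))).filter (fun x => j ≤ x) ∧
    chc S (Finset.Icc a j) = (cuts a b (S.erase (Finset.Icc a j))).filter (fun x => x ≤ j) ∧
    (∀ A ∈ S.erase (Finset.Icc a j), chc (S.erase (Finset.Icc a j)) A = chc S A) := by
  obtain ⟨hT1, hT2⟩ := hT
  have key : ∀ C ∈ S, C ≠ Finset.Icc a j → ∀ x ∈ C, x ∈ Finset.Icc a j → C ⊂ Finset.Icc a j := by
    intro C hC hne x hx hxj
    refine Finset.ssubset_iff_subset_ne.2 ⟨?_, hne⟩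
    rcases hS.2 C hC _ hT1 with h | h | h
    · exact h
    · exact hT2 C hC (h (by simp; omega))
    · exact absurd hxj (Finset.disjoint_left.1 h hx)
  refine ⟨?_, ?_, ?_, ?_⟩
  · simp only [cuts, Finset.mem_filter, Finset.mem_erase]
    refine ⟨by simp; omega, ?_⟩
    rintro C ⟨hne, hC⟩ hx hx1
    have := (key C hC hne j hx (by simp; omega)).1 hx1
    simp at this
  · ext x
    simp only [cuts, Finset.mem_filter, Finset.mem_erase]
    constructor
    · rintro ⟨h1, h2⟩
      refine ⟨⟨h1, fun C hC => h2 C hC.2⟩, ?_⟩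
      by_contra hlt
      have := h2 _ hT1
      simp at this h1
      omega
    · rintro ⟨⟨h1, h2⟩, h3⟩
      refine ⟨h1, fun C hC => ?_⟩
      by_cases hne : C = Finset.Icc a j
      · subst hne
        simp
        omega
      · exact h2 C ⟨hne, hC⟩
  · ext x
    simp only [cuts, chc, Finset.mem_filter, Finset.mem_erase]
    constructor
    · rintro ⟨h1, h2⟩
      have h1' := Finset.mem_Icc.1 h1
      refine ⟨⟨by simp; omega, ?_⟩, h1'.2⟩
      rintro C ⟨hne, hC⟩ hx
      exact h2 C hC (key C hC hne x hx h1) hx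
    · rintro ⟨⟨h1, h2⟩, h3⟩
      have h1' := Finset.mem_Icc.1 h1
      refine ⟨by simp; omega, fun C hC hss => h2 C ⟨hss.ne, hC⟩⟩
  · intro A hA
    rw [Finset.mem_erase] at hA
    unfold chc
    ext x
    simp only [Finset.mem_filter, Finset.mem_erase]
    constructor
    · rintro ⟨h1, h2⟩
      refine ⟨h1, fun C hC hss => ?_⟩
      refine h2 C ⟨?_, hC⟩ hss
      rintro rfl
      have haA : a ∈ A := hss.1 (by simp; omega)
      exact hss.2 (hT2 A hA.2 haA)
    · rintro ⟨h1, h2⟩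
      exact ⟨h1, fun C hC => h2 C hC.2⟩

theorem card_split (X : Finset ℕ) (j : ℕ) (hj : j ∈ X) :
    (X.filter (fun x => j ≤ x)).card + (X.filter (fun x => x ≤ j)).card = X.card + 1 := by
  rw [← Finset.card_union_add_card_inter]
  congr 1
  · congr 1
    ext x
    simp only [Finset.mem_union, Finset.mem_filter]
    have := le_total j x
    tauto
  · rw [Finset.card_eq_one]
    refine ⟨j, ?_⟩
    ext x
    simp only [Finset.mem_inter, Finset.mem_filter, Finset.mem_singleton]
    constructor
    · rintro ⟨⟨_, h⟩, _, h'⟩; omega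
    · rintro rfl; simp [hj]

theorem tp_erase {a b j : ℕ} {S : Finset (Finset ℕ)} (hS : Lam a b S) (haj : a < j) (hjb : j ≤ b)
    (hT : Top a S j) :
    tp S = (chc S (Finset.Icc a j)).card ::ₘ tp (S.erase (Finset.Icc a j)) := by
  have h4 := (core hS haj hjb hT).2.2.2
  unfold tp
  conv_lhs => rw [← Finset.insert_erase hT.1]
  rw [Finset.insert_val_of_notMem (by simp), Multiset.map_cons, Finset.insert_erase hT.1]
  congr 1
  refine Multiset.map_congr rfl ?_
  intro A hA
  rw [h4 A hA]

theorem exists_rank (X : Finset ℕ) (c : ℕ) (hc : 1 ≤ c) (h : c ≤ X.card) :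
    ∃ j ∈ X, (X.filter (fun x => x ≤ j)).card = c := by
  revert c
  refine Finset.induction_on_max X ?_ ?_
  · intro c hc h
    simp at h; omega
  · intro m s hm ih c hc h
    have hms : m ∉ s := fun h => lt_irrefl _ (hm m h)
    rw [Finset.card_insert_of_notMem hms] at h
    by_cases hcs : c ≤ s.card
    · obtain ⟨j, hj, hjc⟩ := ih c hc hcs
      refine ⟨j, Finset.mem_insert_of_mem hj, ?_⟩
      rw [Finset.filter_insert, if_neg (by have := hm j hj; omega)]
      exact hjc
    · refine ⟨m, Finset.mem_insert_self _ _, ?_⟩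
      rw [Finset.filter_true_of_mem, Finset.card_insert_of_notMem hms]
      · omega
      · intro x hx
        rcases Finset.mem_insert.1 hx with rfl | hx
        · exact le_rfl
        · exact (hm x hx).le

theorem rank_inj (X : Finset ℕ) (j j' : ℕ) (hj : j ∈ X) (hj' : j' ∈ X)
    (h : (X.filter (fun x => x ≤ j)).card = (X.filter (fun x => x ≤ j')).card) : j = j' := by
  have aux : ∀ u v : ℕ, v ∈ X → u < v →
      (X.filter (fun x => x ≤ u)).card < (X.filter (fun x => x ≤ v)).card := by
    intro u v hv huv
    apply Finset.card_lt_card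
    rw [Finset.ssubset_iff_of_subset]
    · exact ⟨v, by simp [hv], by simp; omega⟩
    · intro x
      simp only [Finset.mem_filter]
      rintro ⟨h1, h2⟩
      exact ⟨h1, by omega⟩
  rcases lt_trichotomy j j' with hlt | h' | hlt
  · have := aux _ _ hj' hlt; omega
  · exact h'
  · have := aux _ _ hj hlt; omega

/-- build a bigger family -/
theorem build {a b j : ℕ} {T : Finset (Finset ℕ)} (hT : Lam a b T) (hj : j ∈ cuts a b T)
    (hc : 2 ≤ ((cuts a b T).filter (fun x => x ≤ j)).card) :
    a < j ∧ j ≤ b ∧ Finset.Icc a j ∉ T ∧ Lam a b (insert (Finset.Icc a j) T) ∧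
      Top a (insert (Finset.Icc a j) T) j := by
  have hj' := hj
  simp only [cuts, Finset.mem_filter, Finset.mem_Icc] at hj'
  obtain ⟨⟨haj, hjb⟩, hcut⟩ := hj'
  obtain ⟨y, hy, hyj⟩ := Finset.exists_mem_ne (s := (cuts a b T).filter (fun x => x ≤ j)) (by omega) j
  · have hy' := hy
    simp only [cuts, Finset.mem_filter, Finset.mem_Icc] at hy'
    obtain ⟨⟨⟨hay, hyb⟩, hycut⟩, hyj'⟩ := hy'
    have hlt : a < j := by omega
    have hsub : ∀ D ∈ T, D ⊆ Finset.Icc a j ∨ Disjoint D (Finset.Icc a j) := by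
      intro D hD
      have hc' := hcut D hD
      obtain ⟨p, q, h1, h2, h3, rfl⟩ := hT.1 D hD
      simp only [Finset.mem_Icc] at hc'
      by_cases hqj : q ≤ j
      · left; exact Finset.Icc_subset_Icc h1 hqj
      · right
        rw [Finset.disjoint_left]
        intro x hx hx'
        rw [Finset.mem_Icc] at hx hx'
        omega
    refine ⟨hlt, hjb, ?_, ⟨?_, ?_⟩, ?_⟩
    · intro hmem
      have := hycut _ hmem
      simp only [Finset.mem_Icc] at this
      omega
    · intro A hA
      rcases Finset.mem_insert.1 hA with rfl | hA
      · exact ⟨a, j, le_rfl, hlt, hjb, rfl⟩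
      · exact hT.1 A hA
    · intro A hA B hB
      rcases Finset.mem_insert.1 hA with rfl | hA <;> rcases Finset.mem_insert.1 hB with rfl | hB
      · left; exact subset_rfl
      · rcases hsub B hB with h | h
        · right; left; exact h
        · right; right; exact h.symm
      · rcases hsub A hA with h | h
        · left; exact h
        · right; right; exact h
      · exact hT.2 A hA B hB
    · refine ⟨Finset.mem_insert_self _ _, ?_⟩
      intro C hC haC
      rcases Finset.mem_insert.1 hC with rfl | hC
      · exact subset_rfl
      · rcases hsub C hC with h | h
        · exact h
        · exact absurd (Finset.mem_Icc.2 ⟨le_rfl, haj⟩) (Finset.disjoint_left.1 h haC)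

theorem Lam.erase {a b : ℕ} {S : Finset (Finset ℕ)} (hS : Lam a b S) (A : Finset ℕ) :
    Lam a b (S.erase A) :=
  ⟨fun B hB => hS.1 B (Finset.mem_of_mem_erase hB),
   fun B hB C hC => hS.2 B (Finset.mem_of_mem_erase hB) C (Finset.mem_of_mem_erase hC)⟩

def Rel (a b c : ℕ) (S T : Finset (Finset ℕ)) : Prop :=
  ∃ j, a < j ∧ j ≤ b ∧ Top a S j ∧ (chc S (Finset.Icc a j)).card = c ∧ T = S.erase (Finset.Icc a j)

open Classical in
noncomputable def G (a b r : ℕ) (μ : Multiset ℕ) (c : ℕ) : Finset (Finset (Finset ℕ)) :=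
  (F a b r μ).filter (fun S => ∃ T, Rel a b c S T)

theorem card_G (a b r : ℕ) (μ : Multiset ℕ) (c : ℕ) (hr : 1 ≤ r) (hc : 2 ≤ c) (hcμ : c ∈ μ) :
    (G a b r μ c).card = (F a b (r - 1 + c) (μ.erase c)).card := by
  classical
  apply le_antisymm
  · refine Finset.card_le_card_of_forall_subsingleton (Rel a b c) ?_ ?_
    · intro S hS
      unfold G at hS
      rw [Finset.mem_filter, mem_F] at hS
      obtain ⟨⟨hL, hcu, htp⟩, T, hR⟩ := hS
      refine ⟨T, ?_, hR⟩
      obtain ⟨j, haj, hjb, hT, hcc, rfl⟩ := hR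
      obtain ⟨h1, h2, h3, h4⟩ := core hL haj hjb hT
      have h5 := tp_erase hL haj hjb hT
      rw [mem_F]
      refine ⟨hL.erase _, ?_, ?_⟩
      · have := card_split _ j h1
        rw [← h2, ← h3, hcu, hcc] at this
        omega
      · rw [← htp, h5, hcc, Multiset.erase_cons_head]
    · intro T hT S hS S' hS'
      simp only [Set.mem_ofPred_eq, G, Finset.mem_filter, mem_F] at hS hS'
      obtain ⟨⟨⟨hL, -, -⟩, -⟩, j, haj, hjb, hTo, hcc, rfl⟩ := hS
      obtain ⟨⟨⟨hL', -, -⟩, -⟩, j', haj', hjb', hTo', hcc', he⟩ := hS'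
      obtain ⟨h1, h2, h3, h4⟩ := core hL haj hjb hTo
      obtain ⟨h1', h2', h3', h4'⟩ := core hL' haj' hjb' hTo'
      rw [← he] at h1' h2' h3' h4'
      rw [h3] at hcc
      rw [h3'] at hcc'
      have := rank_inj _ j j' h1 h1' (hcc.trans hcc'.symm)
      subst this
      rw [← Finset.insert_erase hTo.1, he, Finset.insert_erase hTo'.1]
  · refine Finset.card_le_card_of_forall_subsingleton (fun T S => Rel a b c S T) ?_ ?_
    · intro T hT
      rw [mem_F] at hT
      obtain ⟨hL, hcu, htp⟩ := hT
      obtain ⟨j, hj, hjc⟩ := exists_rank (cuts a b T) c (by omega) (by omega)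
      obtain ⟨haj, hjb, hnot, hLS, hTop⟩ := build hL hj (by omega)
      obtain ⟨h1, h2, h3, h4⟩ := core hLS haj hjb hTop
      have h5 := tp_erase hLS haj hjb hTop
      rw [Finset.erase_insert hnot] at h1 h2 h3 h4 h5
      have hR : Rel a b c (insert (Finset.Icc a j) T) T :=
        ⟨j, haj, hjb, hTop, by rw [h3, hjc], (Finset.erase_insert hnot).symm⟩
      refine ⟨insert (Finset.Icc a j) T, ?_, hR⟩
      unfold G
      rw [Finset.mem_filter, mem_F]
      refine ⟨⟨hLS, ?_, ?_⟩, T, hR⟩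
      · have := card_split _ j h1
        rw [h2]
        omega
      · rw [h5, h3, hjc, htp, Multiset.cons_erase hcμ]
    · intro S hS T hT T' hT'
      obtain ⟨-, j, haj, hjb, hTo, hcc, rfl⟩ := hT
      obtain ⟨-, j', haj', hjb', hTo', hcc', rfl⟩ := hT'
      rw [top_unique haj.le haj'.le hTo hTo']

theorem mem_F_succ {a b r : ℕ} {μ : Multiset ℕ} {S : Finset (Finset ℕ)} (hab : a ≤ b)
    (hr : 1 ≤ r) :
    S ∈ F (a + 1) b (r - 1) μ ↔ S ∈ F a b r μ ∧ ¬ ∃ A ∈ S, a ∈ A := by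
  have hcard : (¬ ∃ A ∈ S, a ∈ A) → (cuts a b S).card = (cuts (a + 1) b S).card + 1 := by
    intro h
    have : cuts a b S = insert a (cuts (a + 1) b S) := by
      ext x
      simp only [cuts, Finset.mem_filter, Finset.mem_insert, Finset.mem_Icc]
      constructor
      · rintro ⟨h1, h2⟩
        by_cases hx : x = a
        · exact Or.inl hx
        · exact Or.inr ⟨by omega, h2⟩
      · rintro (rfl | ⟨h1, h2⟩)
        · exact ⟨by omega, fun C hC hx => absurd ⟨C, hC, hx⟩ h⟩
        · exact ⟨by omega, h2⟩
    rw [this, Finset.card_insert_of_notMem]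
    simp [cuts]
  rw [mem_F, mem_F]
  constructor
  · rintro ⟨hL, hc, ht⟩
    have hno : ¬ ∃ A ∈ S, a ∈ A := by
      rintro ⟨A, hA, haA⟩
      obtain ⟨p, q, h1, h2, h3, rfl⟩ := hL.1 A hA
      rw [Finset.mem_Icc] at haA
      omega
    refine ⟨⟨⟨?_, hL.2⟩, ?_, ht⟩, hno⟩
    · intro A hA
      obtain ⟨p, q, h1, h2, h3, h4⟩ := hL.1 A hA
      exact ⟨p, q, by omega, h2, h3, h4⟩
    · rw [hcard hno]; omega
  · rintro ⟨⟨hL, hc, ht⟩, hno⟩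
    refine ⟨⟨?_, hL.2⟩, ?_, ht⟩
    · intro A hA
      obtain ⟨p, q, h1, h2, h3, rfl⟩ := hL.1 A hA
      refine ⟨p, q, ?_, h2, h3, rfl⟩
      by_contra hlt
      exact hno ⟨_, hA, by simp; omega⟩
    · have := hcard hno; omega

theorem recur (a b r : ℕ) (μ : Multiset ℕ) (hab : a ≤ b) (hr : 1 ≤ r) (hμ : ∀ c ∈ μ, 2 ≤ c) :
    (F a b r μ).card = (F (a + 1) b (r - 1) μ).card +
      ∑ c ∈ μ.toFinset, (F a b (r - 1 + c) (μ.erase c)).card := by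
  classical
  have h1 : F (a + 1) b (r - 1) μ = (F a b r μ).filter (fun S => ¬ ∃ A ∈ S, a ∈ A) := by
    ext S
    rw [mem_F_succ hab hr, Finset.mem_filter]
  have h2 : (F a b r μ).filter (fun S => ∃ A ∈ S, a ∈ A) = μ.toFinset.biUnion (G a b r μ) := by
    ext S
    simp only [Finset.mem_filter, Finset.mem_biUnion, G, Multiset.mem_toFinset]
    constructor
    · rintro ⟨hS, hex⟩
      obtain ⟨hL, hc, ht⟩ := mem_F.1 hS
      obtain ⟨j, haj, hjb, hT⟩ := exists_top hL hex
      refine ⟨(chc S (Finset.Icc a j)).card, ?_, hS, _, j, haj, hjb, hT, rfl, rfl⟩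
      rw [← ht, tp_erase hL haj hjb hT]
      simp
    · rintro ⟨c, hc, hS, T, j, haj, hjb, hT, -, -⟩
      exact ⟨hS, _, hT.1, by simp; omega⟩
  have h3 : (μ.toFinset.biUnion (G a b r μ)).card = ∑ c ∈ μ.toFinset, (G a b r μ c).card := by
    apply Finset.card_biUnion
    intro c _ c' _ hne
    rw [Function.onFun, Finset.disjoint_left]
    intro S hS hS'
    simp only [G, Finset.mem_filter] at hS hS'
    obtain ⟨-, T, j, haj, hjb, hT, hc, -⟩ := hS
    obtain ⟨-, T', j', haj', hjb', hT', hc', -⟩ := hS'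
    rw [top_unique haj.le haj'.le hT hT'] at hc
    exact hne (hc.symm.trans hc')
  rw [← Finset.card_filter_add_card_filter_not (s := F a b r μ) (fun S => ∃ A ∈ S, a ∈ A), h2, h3, h1,
    add_comm]
  congr 1
  refine Finset.sum_congr rfl ?_
  intro c hc
  rw [Multiset.mem_toFinset] at hc
  exact card_G a b r μ c hr (hμ c hc) hc

def P (μ : Multiset ℕ) : ℕ := ∏ c ∈ μ.toFinset, (μ.count c).factorial

theorem P_erase (μ : Multiset ℕ) (c : ℕ) (hc : c ∈ μ) : P μ = μ.count c * P (μ.erase c) := by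
  have h2 : P (μ.erase c) = ∏ d ∈ μ.toFinset, ((μ.erase c).count d).factorial := by
    unfold P
    apply Finset.prod_subset
    · intro x hx
      rw [Multiset.mem_toFinset] at *
      exact Multiset.mem_of_mem_erase hx
    · intro x _ hx
      rw [Multiset.mem_toFinset] at hx
      rw [Multiset.count_eq_zero_of_notMem hx]
      rfl
  have hc' : c ∈ μ.toFinset := Multiset.mem_toFinset.2 hc
  rw [h2]
  unfold P
  rw [← Finset.mul_prod_erase _ _ hc', ← Finset.mul_prod_erase _ _ hc', Multiset.count_erase_self,
    ← mul_assoc, Nat.mul_factorial_pred (Multiset.count_ne_zero.2 hc)]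
  congr 1
  refine Finset.prod_congr rfl ?_
  intro x hx
  rw [Multiset.count_erase_of_ne (Finset.ne_of_mem_erase hx)]

theorem sum_count (μ : Multiset ℕ) (f : ℕ → ℕ) :
    ∑ c ∈ μ.toFinset, μ.count c * f c = (μ.map f).sum := by
  rw [Finset.sum_multiset_map_count]
  simp

theorem two_card_le (μ : Multiset ℕ) (hμ : ∀ c ∈ μ, 2 ≤ c) : 2 * μ.card ≤ μ.sum := by
  have := Multiset.card_nsmul_le_sum (s := μ) (a := 2) hμ
  simpa [mul_comm] using this

theorem main_count (N : ℕ) : ∀ (a b r : ℕ) (μ : Multiset ℕ), (∀ c ∈ μ, 2 ≤ c) →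
    a ≤ b + 1 → b + 1 - a + μ.card = N + 1 → N + 1 = r + μ.sum →
    (b + 1 - a).factorial * P μ * (F a b r μ).card = r * N.factorial := by
  induction N with
  | zero =>
    intro a b r μ hμ hab hN hs
    have h2 := two_card_le μ hμ
    have hμ0 : μ = 0 := by
      rw [← Multiset.card_eq_zero]; omega
    subst hμ0
    simp at hN hs
    have hb : b = a := by omega
    subst hb
    subst hs
    have : F b b 1 0 = {∅} := by
      ext S
      rw [mem_F, Finset.mem_singleton]
      constructor
      · rintro ⟨-, -, h⟩
        simpa [tp] using h
      · rintro rfl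
        refine ⟨⟨by simp, by simp⟩, by simp [cuts], by simp [tp]⟩
    rw [this]
    simp [P]
  | succ N ih =>
    intro a b r μ hμ hab hN hs
    have h2 := two_card_le μ hμ
    have hab' : a ≤ b := by omega
    rcases Nat.eq_zero_or_pos r with rfl | hr
    · have : F a b 0 μ = ∅ := by
        rw [Finset.eq_empty_iff_forall_notMem]
        intro S hS
        obtain ⟨hL, hc, ht⟩ := mem_F.1 hS
        have hb : b ∈ cuts a b S := by
          simp only [cuts, Finset.mem_filter, Finset.mem_Icc]
          refine ⟨by omega, ?_⟩
          intro C hC _ hb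
          obtain ⟨p, q, h1, h2, h3, rfl⟩ := hL.1 C hC
          rw [Finset.mem_Icc] at hb
          omega
        rw [Finset.card_eq_zero.1 hc] at hb
        simp at hb
      rw [this]
      simp
    · obtain ⟨r, rfl⟩ : ∃ r', r = r' + 1 := ⟨r - 1, by omega⟩
      obtain ⟨n, hn⟩ : ∃ n, b + 1 - a = n + 1 := ⟨b - a, by omega⟩
      rw [recur a b (r + 1) μ hab' hr hμ, mul_add, Finset.mul_sum]
      simp only [Nat.add_sub_cancel]
      have e1 := ih (a + 1) b r μ hμ (by omega) (by omega) (by omega)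
      have hn' : b + 1 - (a + 1) = n := by omega
      rw [hn'] at e1
      have e2 : ∀ c ∈ μ.toFinset, (b + 1 - a).factorial * P μ * (F a b (r + c) (μ.erase c)).card
          = μ.count c * ((r + c) * N.factorial) := by
        intro c hc
        rw [Multiset.mem_toFinset] at hc
        have hcard := Multiset.card_erase_add_one hc
        have hsum : c + (μ.erase c).sum = μ.sum := Multiset.sum_erase hc
        have := ih a b (r + c) (μ.erase c) (fun d hd => hμ d (Multiset.mem_of_mem_erase hd)) hab
          (by omega) (by omega)
        rw [P_erase μ c hc, ← this]
        ring
      rw [Finset.sum_congr rfl e2, sum_count, hn, Nat.factorial_succ]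
      have e3 : (μ.map (fun c => (r + c) * N.factorial)).sum = (r * μ.card + μ.sum) * N.factorial := by
        rw [Multiset.sum_map_mul_right, Multiset.sum_map_add]
        simp [mul_comm]
      rw [e3, Nat.factorial_succ]
      have e4 : (n + 1) * n.factorial * P μ * (F (a + 1) b r μ).card = (n + 1) * (r * N.factorial) := by
        rw [← e1]; ring
      rw [e4]
      have e5 : (n + 1) * r + (r * μ.card + μ.sum) = (r + 1) * (N + 1) := by
        have : n + 1 + μ.card = N + 1 + 1 := by omega
        have h6 : μ.sum + r = N + 1 := by omega
        nlinarith
      calc _ = ((n + 1) * r + (r * μ.card + μ.sum)) * N.factorial := by ring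
        _ = _ := by rw [e5]; ring

/-- children are counted by right ends -/
theorem card_children {n : ℕ} {S : Finset (Finset ℕ)} (hS : Lam 1 n S) {A : Finset ℕ}
    (hA : A ∈ S) : (children n S A).card = (chc S A).card := by
  have hint : ∀ B ∈ S ∪ (Finset.Icc 1 n).image (fun x => ({x} : Finset ℕ)),
      ∃ p q, 1 ≤ p ∧ p ≤ q ∧ q ≤ n ∧ B = Finset.Icc p q ∧ (p < q → B ∈ S) := by
    intro B hB
    rcases Finset.mem_union.1 hB with hB | hB
    · obtain ⟨p, q, h1, h2, h3, h4⟩ := hS.1 B hB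
      exact ⟨p, q, h1, h2.le, h3, h4, fun _ => hB⟩
    · obtain ⟨x, hx, rfl⟩ := Finset.mem_image.1 hB
      rw [Finset.mem_Icc] at hx
      exact ⟨x, x, hx.1, le_rfl, hx.2, by simp, fun h => absurd h (lt_irrefl _)⟩
  have hlam : ∀ B ∈ S ∪ (Finset.Icc 1 n).image (fun x => ({x} : Finset ℕ)),
      ∀ C ∈ S ∪ (Finset.Icc 1 n).image (fun x => ({x} : Finset ℕ)), ∀ x ∈ B, x ∈ C →
        B ⊆ C ∨ C ⊆ B := by
    intro B hB C hC x hxB hxC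
    rcases Finset.mem_union.1 hB with hB | hB
    · rcases Finset.mem_union.1 hC with hC | hC
      · rcases hS.2 B hB C hC with h | h | h
        · exact Or.inl h
        · exact Or.inr h
        · exact absurd hxC (Finset.disjoint_left.1 h hxB)
      · obtain ⟨y, hy, rfl⟩ := Finset.mem_image.1 hC
        right
        rw [Finset.mem_singleton] at hxC
        subst hxC
        simpa using hxB
    · obtain ⟨y, hy, rfl⟩ := Finset.mem_image.1 hB
      left
      rw [Finset.mem_singleton] at hxB
      subst hxB
      simpa using hxC
  obtain ⟨pA, qA, hA1, hA2, hA3, hAe⟩ := hS.1 A hA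
  apply le_antisymm
  · refine Finset.card_le_card_of_forall_subsingleton (fun B q => ∃ p, p ≤ q ∧ B = Finset.Icc p q) ?_ ?_
    · intro B hB
      unfold children at hB
      obtain ⟨hBU, hBA, hmax⟩ := Finset.mem_filter.1 hB
      obtain ⟨p, q, h1, h2, h3, hBe, h4⟩ := hint B hBU
      have hqB : q ∈ B := by rw [hBe]; simp [h2]
      refine ⟨q, ?_, p, h2, hBe⟩
      unfold chc
      rw [Finset.mem_filter]
      refine ⟨hBA.1 hqB, ?_⟩
      intro C hC hCA hqC hqC1
      have hq1B : q + 1 ∉ B := by rw [hBe]; simp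
      rcases hlam B hBU C (Finset.mem_union_left _ hC) q hqB hqC with h | h
      · refine hmax C hC ⟨h, fun h' => hq1B (h' hqC1)⟩ hCA
      · exact hq1B (h hqC1)
    · intro q hq B hB B' hB'
      obtain ⟨hB, p, hpq, hBe⟩ := hB
      obtain ⟨hB', p', hpq', hBe'⟩ := hB'
      unfold children at hB hB'
      obtain ⟨hBU, hBA, hmax⟩ := Finset.mem_filter.1 hB
      obtain ⟨hBU', hBA', hmax'⟩ := Finset.mem_filter.1 hB'
      have aux : ∀ p p' : ℕ, p ≤ q → p' < p → 
          Finset.Icc p' q ∈ S ∪ (Finset.Icc 1 n).image (fun x => ({x} : Finset ℕ)) →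
          Finset.Icc p' q ⊂ A → (∀ C ∈ S, Finset.Icc p q ⊂ C → ¬ C ⊂ A) → False := by
        intro p p' hpq hlt hU hss hm
        have hmem : Finset.Icc p' q ∈ S := by
          rcases Finset.mem_union.1 hU with h | h
          · exact h
          · obtain ⟨y, hy, he⟩ := Finset.mem_image.1 h
            have t1 : p' ∈ ({y} : Finset ℕ) := by
              rw [show ({y} : Finset ℕ) = _ from he]; simp; omega
            have t2 : q ∈ ({y} : Finset ℕ) := by
              rw [show ({y} : Finset ℕ) = _ from he]; simp; omega
            rw [Finset.mem_singleton] at t1 t2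
            omega
        refine hm _ hmem ⟨Finset.Icc_subset_Icc hlt.le le_rfl, ?_⟩ hss
        intro h
        have := h (Finset.mem_Icc.2 ⟨le_rfl, by omega⟩)
        rw [Finset.mem_Icc] at this
        omega
      subst hBe hBe'
      rcases lt_trichotomy p p' with h | h | h
      · exact (aux p' p hpq' h hBU hBA hmax').elim
      · rw [h]
      · exact (aux p p' hpq h hBU' hBA' hmax).elim
  · refine Finset.card_le_card_of_forall_subsingleton (fun q B => ∃ p, p ≤ q ∧ B = Finset.Icc p q) ?_ ?_
    · intro q hq
      unfold chc at hq
      obtain ⟨hqA, hcut⟩ := Finset.mem_filter.1 hq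
      have hqA' := hqA
      rw [hAe, Finset.mem_Icc] at hqA'
      obtain ⟨B, hB, hBmax⟩ := Finset.exists_max_image
        ((S ∪ (Finset.Icc 1 n).image (fun x => ({x} : Finset ℕ))).filter (fun B => q ∈ B ∧ B ⊂ A))
        Finset.card ⟨{q}, by
          rw [Finset.mem_filter]
          refine ⟨Finset.mem_union_right _ (Finset.mem_image.2 ⟨q, by simp; omega, rfl⟩), by simp, ?_⟩
          refine ⟨by simpa using hqA, ?_⟩
          intro h
          have t1 := h (show pA ∈ A by rw [hAe]; simp; omega)
          have t2 := h (show qA ∈ A by rw [hAe]; simp; omega)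
          rw [Finset.mem_singleton] at t1 t2
          omega⟩
      obtain ⟨hBU, hqB, hBA⟩ := Finset.mem_filter.1 hB
      obtain ⟨p, q', h1, h2, h3, hBe, h4⟩ := hint B hBU
      have hqB' := hqB
      rw [hBe, Finset.mem_Icc] at hqB'
      have hqq : q' = q := by
        by_contra hne
        have hBS := h4 (by omega)
        exact hcut B hBS hBA hqB (by rw [hBe]; simp; omega)
      subst hqq
      refine ⟨B, ?_, p, h2, hBe⟩
      unfold children
      rw [Finset.mem_filter]
      refine ⟨hBU, hBA, ?_⟩
      intro C hC hBC hCA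
      have := hBmax C (Finset.mem_filter.2 ⟨Finset.mem_union_left _ hC, hBC.1 hqB, hCA⟩)
      have h' := Finset.card_lt_card hBC
      omega
    · intro B hB q hq q' hq'
      obtain ⟨hq0, p, hpq, hBe⟩ := hq
      obtain ⟨hq0', p', hpq', hBe'⟩ := hq'
      have t1 : q ∈ B := by rw [hBe]; simp [hpq]
      have t2 : q' ∈ B := by rw [hBe']; simp [hpq']
      rw [hBe'] at t1
      rw [hBe] at t2
      rw [Finset.mem_Icc] at t1 t2
      omega

theorem root_iff {n : ℕ} (hn : 2 ≤ n) {S : Finset (Finset ℕ)} (hS : Lam 1 n S) :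
    Finset.Icc 1 n ∈ S ↔ (cuts 1 n S).card = 1 := by
  have hncut : n ∈ cuts 1 n S := by
    simp only [cuts, Finset.mem_filter, Finset.mem_Icc]
    refine ⟨by omega, ?_⟩
    intro C hC _ hb
    obtain ⟨p, q, h1, h2, h3, rfl⟩ := hS.1 C hC
    rw [Finset.mem_Icc] at hb
    omega
  constructor
  · intro h
    rw [Finset.card_eq_one]
    refine ⟨n, ?_⟩
    ext x
    rw [Finset.mem_singleton]
    constructor
    · intro hx
      simp only [cuts, Finset.mem_filter] at hx
      have := hx.2 _ h hx.1
      have h1 := hx.1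
      rw [Finset.mem_Icc] at this h1
      omega
    · rintro rfl; exact hncut
  · intro h
    obtain ⟨y, hy⟩ := Finset.card_eq_one.1 h
    have hyn : n = y := by rw [hy] at hncut; simpa using hncut
    subst hyn
    have hcov : ∀ x, 1 ≤ x → x < n → ∃ C ∈ S, x ∈ C ∧ x + 1 ∈ C := by
      intro x hx1 hxn
      by_contra hno
      have : x ∈ cuts 1 n S := by
        simp only [cuts, Finset.mem_filter, Finset.mem_Icc]
        exact ⟨by omega, fun C hC h1 h2 => hno ⟨C, hC, h1, h2⟩⟩
      rw [hy, Finset.mem_singleton] at this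
      omega
    obtain ⟨C, hC, h1C, -⟩ := hcov 1 le_rfl (by omega)
    obtain ⟨j, hj1, hjn, hT⟩ := exists_top hS ⟨C, hC, h1C⟩
    rcases Nat.lt_or_ge j n with hlt | hge
    · exfalso
      have hjc := (core hS hj1 hjn hT).1
      obtain ⟨D, hD, hjD, hjD1⟩ := hcov j (by omega) hlt
      simp only [cuts, Finset.mem_filter, Finset.mem_erase] at hjc
      refine hjc.2 D ⟨?_, hD⟩ hjD hjD1
      rintro rfl
      simp at hjD1
    · have : j = n := by omega
      subst this
      exact hT.1

theorem final (n k : ℕ) (hn : 2 ≤ n) (hk1 : 1 ≤ k)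
    (s : ℕ) (i m : Fin s → ℕ)
    (hmono : StrictMono i) (hi3 : ∀ j, 3 ≤ i j) (hm1 : ∀ j, 1 ≤ m j)
    (hsum : ∑ j, m j = k) (hsum2 : ∑ j, i j * m j = n + 2 * k - 1) :
    n.factorial * (∏ j, (m j).factorial) *
        Nat.card {S : Finset (Finset ℕ) // IsIntNested n k S ∧
          ∀ j, m j = (S.filter (fun A => (children n S A).card + 1 = i j)).card} =
      (n + k - 1).factorial := by
  set μ : Multiset ℕ := ∑ j, Multiset.replicate (m j) (i j - 1) with hμ
  have hinj : ∀ j j', i j - 1 = i j' - 1 → j = j' := by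
    intro j j' h
    apply hmono.injective
    have := hi3 j
    have := hi3 j'
    omega
  have hcount : ∀ j, μ.count (i j - 1) = m j := by
    intro j
    rw [hμ, Multiset.count_sum', Finset.sum_eq_single j]
    · simp
    · intro j' _ hne
      rw [Multiset.count_replicate, if_neg]
      intro h
      exact hne (hinj _ _ h)
    · simp
  have hmem : ∀ c, c ∈ μ ↔ ∃ j, c = i j - 1 := by
    intro c
    rw [hμ, Multiset.mem_sum]
    constructor
    · rintro ⟨j, _, h⟩
      exact ⟨j, Multiset.eq_of_mem_replicate h⟩
    · rintro ⟨j, rfl⟩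
      exact ⟨j, Finset.mem_univ _, by rw [Multiset.mem_replicate]; exact ⟨by have := hm1 j; omega, rfl⟩⟩
  have hcard : μ.card = k := by
    rw [hμ, Multiset.card_sum, ← hsum]
    simp
  have hsumμ : μ.sum + k = n + 2 * k - 1 := by
    rw [← hsum2, ← hsum, hμ, Multiset.sum_sum, ← Finset.sum_add_distrib]
    refine Finset.sum_congr rfl ?_
    intro j _
    obtain ⟨t, ht⟩ : ∃ t, i j = t + 1 := ⟨i j - 1, by have := hi3 j; omega⟩
    rw [ht]
    simp
    ring
  have hP : P μ = ∏ j, (m j).factorial := by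
    have : μ.toFinset = Finset.univ.image (fun j => i j - 1) := by
      ext c
      rw [Multiset.mem_toFinset, hmem]
      simp [eq_comm]
    unfold P
    rw [this, Finset.prod_image (fun j _ j' _ h => hinj j j' h)]
    exact Finset.prod_congr rfl (fun j _ => by rw [hcount])
  have hset : ∀ S : Finset (Finset ℕ), (IsIntNested n k S ∧
      ∀ j, m j = (S.filter (fun A => (children n S A).card + 1 = i j)).card) ↔ S ∈ F 1 n 1 μ := by
    intro S
    have hcnt : Lam 1 n S → ∀ j, (S.filter (fun A => (children n S A).card + 1 = i j)).card
        = (tp S).count (i j - 1) := by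
      intro hL j
      unfold tp
      rw [Multiset.count_map, ← Finset.filter_val, Finset.card_val]
      congr 1
      apply Finset.filter_congr
      intro A hA
      rw [card_children hL hA]
      have := hi3 j
      omega
    have htpc : (tp S).card = S.card := by simp [tp]
    rw [mem_F]
    constructor
    · rintro ⟨⟨h1, h2, h3, h4⟩, h5⟩
      have hL : Lam 1 n S := by
        refine ⟨?_, h4⟩
        intro A hA
        obtain ⟨hA2, p, q, hp, hpq, hq, rfl⟩ := h3 A hA
        refine ⟨p, q, hp, ?_, hq, rfl⟩
        rw [Nat.card_Icc] at hA2
        omega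
      refine ⟨hL, (root_iff hn hL).1 h2, ?_⟩
      symm
      apply Multiset.eq_of_le_of_card_le
      · rw [Multiset.le_iff_count]
        intro c
        by_cases hc : c ∈ μ
        · obtain ⟨j, rfl⟩ := (hmem c).1 hc
          rw [hcount, h5 j, hcnt hL]
        · rw [Multiset.count_eq_zero_of_notMem hc]
          exact Nat.zero_le _
      · rw [htpc, h1, hcard]
    · rintro ⟨hL, hc, ht⟩
      refine ⟨⟨by rw [← htpc, ht, hcard], (root_iff hn hL).2 hc, ?_, hL.2⟩, ?_⟩
      · intro A hA
        obtain ⟨p, q, h1, h2, h3, rfl⟩ := hL.1 A hA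
        exact ⟨by rw [Nat.card_Icc]; omega, p, q, h1, h2.le, h3, rfl⟩
      · intro j
        rw [hcnt hL, ht, hcount]
  have hNC : Nat.card {S : Finset (Finset ℕ) // IsIntNested n k S ∧
          ∀ j, m j = (S.filter (fun A => (children n S A).card + 1 = i j)).card} =
        (F 1 n 1 μ).card := by
    rw [Nat.card_congr (Equiv.subtypeEquivRight hset)]
    simp
  rw [hNC, ← hP]
  have := main_count (n + k - 1) 1 n 1 μ (by
    intro c hc
    obtain ⟨j, rfl⟩ := (hmem c).1 hc
    have := hi3 j
    omega) (by omega) (by omega) (by omega)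
  simpa using this

end Dissect

/-- The number of dissections of a convex `(n+1)`-gon with labelled edges by `k-1`
noncrossing diagonals of type `(i₁^{m₁},...,i_s^{m_s})` equals
`(n+k-1)! / (n! · m₁! ⋯ m_s!)` (stated multiplicatively). -/
theorem stmt13 (n k : ℕ) (hn : 2 ≤ n) (hk1 : 1 ≤ k) (hk : k ≤ n - 1)
    (s : ℕ) (i m : Fin s → ℕ)
    (hmono : StrictMono i) (hi3 : ∀ j, 3 ≤ i j) (hin : ∀ j, i j ≤ n + 1)
    (hm1 : ∀ j, 1 ≤ m j)
    (hsum : ∑ j, m j = k) (hsum2 : ∑ j, i j * m j = n + 2 * k - 1) :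
    n.factorial * (∏ j, (m j).factorial) *
        Nat.card {S : Finset (Finset ℕ) // IsIntNested n k S ∧
          ∀ j, m j = (S.filter (fun A => (children n S A).card + 1 = i j)).card} =
      (n + k - 1).factorial := by
  exact Dissect.final n k hn hk1 s i m hmono hi3 hm1 hsum hsum2
end

section
/- For n ≥ 2, the total number over k = 1,...,n-1 of nested families of k intervals of {1,...,n} (each of size ≥ 2, containing {1,...,n}, pairwise nested or disjoint) equals Σ_{k=1}^{n-1} (1/k)·C(n-2,k-1)·C(n+k-1,k-1), which is the total number of dissections (by any number of noncrossing diagonals, including zero) of a convex (n+1)-gon, the (n-1)-st super-Catalan (little Schröder) number. -/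
open Finset in
def lam (S : Finset (ℕ × ℕ)) : Prop := ∀ p ∈ S, ∀ q ∈ S,
  p.2 < q.1 ∨ q.2 < p.1 ∨ (p.1 ≤ q.1 ∧ q.2 ≤ p.2) ∨ (q.1 ≤ p.1 ∧ p.2 ≤ q.2)

open Classical in
noncomputable def famG (a b : ℕ) : Finset (Finset (ℕ × ℕ)) :=
  (((Finset.Icc a b ×ˢ Finset.Icc a b).filter (fun p => p.1 < p.2)).powerset).filter lam

open Classical in
noncomputable def famY (a b : ℕ) : Finset (Finset (ℕ × ℕ)) :=
  (famG a b).filter (fun S => a < b → (a, b) ∈ S)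

open Classical in
noncomputable def famH (a b : ℕ) : Finset (Finset (ℕ × ℕ)) :=
  (famG a b).filter (fun S => (a, b) ∉ S)

lemma mem_famG (a b : ℕ) (S) : S ∈ famG a b ↔
    (∀ p ∈ S, a ≤ p.1 ∧ p.1 < p.2 ∧ p.2 ≤ b) ∧ lam S := by
  classical
  simp only [famG, Finset.mem_filter, Finset.mem_powerset]
  refine and_congr_left fun _ => ⟨fun h p hp => ?_, fun h p hp => ?_⟩
  · have := h hp
    simp only [Finset.mem_filter, Finset.mem_product, Finset.mem_Icc] at this
    omega
  · have := h p hp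
    simp only [Finset.mem_filter, Finset.mem_product, Finset.mem_Icc]
    omega

lemma mem_famY (a b : ℕ) (S) : S ∈ famY a b ↔ S ∈ famG a b ∧ (a < b → (a,b) ∈ S) := by
  classical
  simp [famY]

lemma mem_famH (a b : ℕ) (S) : S ∈ famH a b ↔ S ∈ famG a b ∧ (a,b) ∉ S := by
  classical
  simp [famH]

open Polynomial in
noncomputable def wt (F : Finset (Finset (ℕ × ℕ))) : ℚ[X] := ∑ S ∈ F, X ^ S.card

lemma famG_self (a : ℕ) : famG a a = {∅} := by
  ext S
  rw [mem_famG, Finset.mem_singleton]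
  constructor
  · rintro ⟨h, -⟩
    refine Finset.eq_empty_of_forall_notMem fun p hp => ?_
    have := h p hp
    omega
  · rintro rfl
    simp [lam]

lemma famY_self (a : ℕ) : famY a a = {∅} := by
  ext S
  simp [mem_famY, famG_self]

lemma wt_G (a b : ℕ) (h : a < b) : wt (famG a b) = wt (famY a b) + wt (famH a b) := by
  classical
  unfold wt famY famH
  simp only [h, true_imp_iff]
  rw [Finset.sum_filter_add_sum_filter_not]

open Polynomial in
lemma wt_Y (a b : ℕ) (h : a < b) : wt (famY a b) = X * wt (famH a b) := by
  classical
  unfold wt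
  rw [Finset.mul_sum]
  refine Finset.sum_bij' (fun S _ => S.erase (a,b)) (fun S _ => insert (a,b) S) ?_ ?_ ?_ ?_ ?_
  · intro S hS
    simp only [mem_famH, mem_famY, mem_famG, lam] at hS ⊢
    refine ⟨⟨fun p hp => hS.1.1 p (Finset.mem_of_mem_erase hp), fun p hp q hq =>
      hS.1.2 p (Finset.mem_of_mem_erase hp) q (Finset.mem_of_mem_erase hq)⟩, by simp⟩
  · intro S hS
    simp only [mem_famH, mem_famY, mem_famG, lam] at hS ⊢
    obtain ⟨⟨h1, h2⟩, h3⟩ := hS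
    refine ⟨⟨fun p hp => ?_, fun p hp q hq => ?_⟩, by simp⟩
    · rcases Finset.mem_insert.1 hp with rfl | hp
      · simp [h]
      · exact h1 p hp
    · rcases Finset.mem_insert.1 hp with rfl | hp <;> rcases Finset.mem_insert.1 hq with rfl | hq
      · simp
      · have := h1 q hq
        dsimp only
        omega
      · have := h1 p hp
        dsimp only
        omega
      · exact h2 p hp q hq
  · intro S hS
    exact Finset.insert_erase (((mem_famY _ _ _).1 hS).2 h)
  · intro S hS
    exact Finset.erase_insert ((mem_famH _ _ _).1 hS).2
  · intro S hS
    have hm := ((mem_famY _ _ _).1 hS).2 h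
    rw [← pow_succ', Finset.card_erase_add_one hm]

open Classical in
/-- left end of the maximal interval ending in `b` -/
noncomputable def lend (b : ℕ) (S : Finset (ℕ × ℕ)) : ℕ :=
  (insert b ((S.filter (fun p => p.2 = b)).image Prod.fst)).min' (Finset.insert_nonempty _ _)

lemma lend_eq (b : ℕ) (S : Finset (ℕ × ℕ)) (j : ℕ) : lend b S = j ↔
    (j = b ∨ (j, b) ∈ S) ∧ j ≤ b ∧ ∀ i, (i, b) ∈ S → j ≤ i := by
  classical
  unfold lend
  rw [Finset.min'_eq_iff]
  simp only [Finset.mem_insert, Finset.mem_image, Finset.mem_filter, Prod.exists,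
    exists_and_right, exists_eq_right]
  constructor
  · rintro ⟨h1, h2⟩
    refine ⟨?_, h2 b (Or.inl rfl), fun i hi => h2 i (Or.inr ?_)⟩
    · simpa using h1
    · simpa using hi
  · rintro ⟨h1, h2, h3⟩
    refine ⟨by simpa using h1, ?_⟩
    rintro i (rfl | hi)
    · exact h2
    · exact h3 i (by simpa using hi)

lemma wt_H (a b : ℕ) (h : a < b) : wt (famH a b) =
    ∑ j ∈ Finset.Ioc a b, wt (famG a (j - 1)) * wt (famY j b) := by
  classical
  unfold wt
  have hmap : ∀ S ∈ famH a b, lend b S ∈ Finset.Ioc a b := by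
    intro S hS
    simp only [mem_famH, mem_famG] at hS
    obtain ⟨h1, h2, h3⟩ := (lend_eq b S _).1 rfl
    rw [Finset.mem_Ioc]
    refine ⟨?_, h2⟩
    rcases h1 with h1 | h1
    · omega
    · have := hS.1.1 _ h1
      dsimp only at this
      refine lt_of_le_of_ne this.1 fun he => hS.2 (he ▸ h1)
  rw [← Finset.sum_fiberwise_of_maps_to hmap]
  refine Finset.sum_congr rfl fun j hj => ?_
  rw [Finset.mem_Ioc] at hj
  rw [Finset.sum_mul_sum, ← Finset.sum_product']
  have key : ∀ S ∈ (famH a b).filter (fun S => lend b S = j), ∀ p ∈ S, p.2 < j ∨ j ≤ p.1 := by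
    intro S hS p hp
    simp only [Finset.mem_filter, mem_famH, mem_famG, lend_eq, lam] at hS
    obtain ⟨⟨⟨h1, h2⟩, h3⟩, h4, h5, h6⟩ := hS
    have hp1 := h1 p hp
    by_cases hb : p.2 = b
    · right
      apply h6
      rw [← hb]
      exact hp
    · rcases h4 with h4 | h4
      · omega
      · have := h2 p hp _ h4
        dsimp only at this
        omega
  refine Finset.sum_bij' (fun S _ => (S.filter (fun p => p.2 < j), S.filter (fun p => j ≤ p.1)))
    (fun T _ => T.1 ∪ T.2) ?_ ?_ ?_ ?_ ?_
  · intro S hS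
    simp only [Finset.mem_filter, mem_famH, mem_famG, lend_eq, lam, Finset.mem_product,
      mem_famY] at hS ⊢
    obtain ⟨⟨⟨h1, h2⟩, h3⟩, h4, h5, h6⟩ := hS
    refine ⟨⟨fun p hp => ?_, fun p hp q hq => h2 p hp.1 q hq.1⟩,
      ⟨fun p hp => ?_, fun p hp q hq => h2 p hp.1 q hq.1⟩, fun hjb => ⟨?_, le_rfl⟩⟩
    · have := h1 p hp.1
      omega
    · have := h1 p hp.1
      omega
    · rcases h4 with h4 | h4
      · omega
      · exact h4
  · rintro ⟨S, T⟩ hS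
    simp only [Finset.mem_filter, mem_famH, mem_famG, lend_eq, lam, Finset.mem_product,
      mem_famY, Finset.mem_union] at hS ⊢
    obtain ⟨⟨h1, h2⟩, ⟨h3, h4⟩, h5⟩ := hS
    refine ⟨⟨⟨?_, ?_⟩, ?_⟩, ?_, hj.2, ?_⟩
    · rintro p (hp | hp)
      · have := h1 p hp
        omega
      · have := h3 p hp
        omega
    · rintro p (hp | hp) q (hq | hq)
      · exact h2 p hp q hq
      · have := h1 p hp
        have := h3 q hq
        omega
      · have := h3 p hp
        have := h1 q hq
        omega
      · exact h4 p hp q hq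
    · rintro (hp | hp)
      · have := h1 _ hp
        dsimp only at this
        omega
      · have := h3 _ hp
        dsimp only at this
        omega
    · rcases hj.2.eq_or_lt with he | hl
      · exact Or.inl he
      · exact Or.inr (Or.inr (h5 hl))
    · rintro i (hp | hp)
      · have := h1 _ hp
        dsimp only at this
        omega
      · have := h3 _ hp
        dsimp only at this
        omega
  · intro S hS
    have := key S hS
    ext p
    simp only [Finset.mem_union, Finset.mem_filter]
    have := this p
    tauto
  · rintro ⟨S, T⟩ hS
    simp only [mem_famG, Finset.mem_product, mem_famY] at hS
    obtain ⟨⟨h1, h2⟩, ⟨h3, h4⟩, h5⟩ := hS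
    refine Prod.ext ?_ ?_
    · ext p
      simp only [Finset.mem_union, Finset.mem_filter]
      constructor
      · rintro ⟨hp | hp, hl⟩
        · exact hp
        · have := h3 p hp
          omega
      · intro hp
        have := h1 p hp
        exact ⟨Or.inl hp, by omega⟩
    · ext p
      simp only [Finset.mem_union, Finset.mem_filter]
      constructor
      · rintro ⟨hp | hp, hl⟩
        · have := h1 p hp
          omega
        · exact hp
      · intro hp
        have := h3 p hp
        exact ⟨Or.inr hp, by omega⟩
  · intro S hS
    have hk := key S hS
    simp only [Finset.mem_filter, mem_famH, mem_famG] at hS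
    rw [← pow_add, ← Finset.card_union_of_disjoint]
    · congr 2
      ext p
      simp only [Finset.mem_union, Finset.mem_filter]
      have := hk p
      tauto
    · rw [Finset.disjoint_left]
      intro p hp hq
      rw [Finset.mem_filter] at hp hq
      have := hS.1.1.1 p hp.1
      omega

lemma wt_shift (n : ℕ) : ∀ a, wt (famG a (a + n)) = wt (famG 1 (1 + n)) ∧
    wt (famY a (a + n)) = wt (famY 1 (1 + n)) := by
  induction n using Nat.strong_induction_on with
  | _ n ih =>
  intro a
  rcases Nat.eq_zero_or_pos n with rfl | hn
  · simp [famG_self, famY_self]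
  · have hH : ∀ a, wt (famH a (a + n)) =
        ∑ i ∈ Finset.range n, wt (famG 1 (1 + i)) * wt (famY 1 (1 + (n - 1 - i))) := by
      intro a
      rw [wt_H a (a + n) (by omega)]
      symm
      refine Finset.sum_bij' (fun i _ => a + 1 + i) (fun j _ => j - (a + 1)) ?_ ?_ ?_ ?_ ?_
      · intro i hi
        simp at hi ⊢
        omega
      · intro i hi
        simp at hi ⊢
        omega
      · intro i hi
        simp
      · intro i hi
        simp at hi ⊢
        omega
      · intro i hi
        rw [Finset.mem_range] at hi
        rw [← (ih i hi a).1, ← (ih (n - 1 - i) (by omega) (a + 1 + i)).2]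
        congr 3
        · omega
        · omega
    rw [wt_G _ _ (by omega), wt_G _ _ (by omega), wt_Y _ _ (by omega), wt_Y _ _ (by omega),
      hH, hH]
    exact ⟨rfl, rfl⟩

/-- Coefficient sequences. -/
noncomputable def yc (n : ℕ) : Polynomial ℚ := if n = 0 then 0 else wt (famY 1 n)
noncomputable def gc (n : ℕ) : Polynomial ℚ := if n = 0 then 0 else wt (famG 1 n)

lemma yc_zero : yc 0 = 0 := by simp [yc]
lemma gc_zero : gc 0 = 0 := by simp [gc]
lemma yc_one : yc 1 = 1 := by simp [yc, famY_self, wt]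
lemma gc_one : gc 1 = 1 := by simp [gc, famG_self, wt]

lemma wt_H_conv (n : ℕ) (hn : 2 ≤ n) : wt (famH 1 n) =
    ∑ p ∈ Finset.HasAntidiagonal.antidiagonal n, gc p.1 * yc p.2 := by
  rw [Finset.Nat.sum_antidiagonal_eq_sum_range_succ (fun i j => gc i * yc j),
    wt_H 1 n (by omega), Finset.sum_range_succ, Finset.sum_range_eq_add_Ico _ (by omega)]
  simp only [gc_zero, zero_mul, Nat.sub_self, yc_zero, mul_zero, zero_add, add_zero]
  refine Finset.sum_bij' (fun j _ => j - 1) (fun j _ => j + 1) ?_ ?_ ?_ ?_ ?_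
  · intro i hi
    simp at hi ⊢
    omega
  · intro i hi
    simp at hi ⊢
    omega
  · intro i hi
    simp at hi ⊢
    omega
  · intro i hi
    simp
  · intro i hi
    rw [Finset.mem_Ioc] at hi
    rw [gc, yc, if_neg (by omega), if_neg (by omega)]
    have := (wt_shift (n - i) i).2
    rw [show i + (n - i) = n by omega, show 1 + (n - i) = n - (i - 1) by omega] at this
    rw [this]

open Polynomial in
lemma yc_eq (n : ℕ) (hn : 2 ≤ n) :
    yc n = X * ∑ p ∈ Finset.HasAntidiagonal.antidiagonal n, gc p.1 * yc p.2 := by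
  rw [← wt_H_conv n hn, ← wt_Y 1 n (by omega), yc, if_neg (by omega)]

lemma gc_eq (n : ℕ) (hn : 2 ≤ n) :
    gc n = yc n + ∑ p ∈ Finset.HasAntidiagonal.antidiagonal n, gc p.1 * yc p.2 := by
  rw [← wt_H_conv n hn, yc, if_neg (by omega), gc, if_neg (by omega), wt_G _ _ (by omega)]

noncomputable def yS : PowerSeries (Polynomial ℚ) := PowerSeries.mk yc
noncomputable def gS : PowerSeries (Polynomial ℚ) := PowerSeries.mk gc

lemma anti_one : Finset.HasAntidiagonal.antidiagonal 1 = {(0,1),(1,0)} := rfl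

lemma yS_eq : yS = PowerSeries.X + PowerSeries.C (Polynomial.X : Polynomial ℚ) * (gS * yS) := by
  ext1 n
  rw [map_add, PowerSeries.coeff_C_mul, PowerSeries.coeff_mul, PowerSeries.coeff_X]
  simp only [yS, gS, PowerSeries.coeff_mk]
  rcases n with _ | _ | n
  · simp [yc_zero]
  · simp [anti_one, yc_zero, yc_one, gc_zero]
  · rw [if_neg (by omega), zero_add]
    exact yc_eq _ (by omega)

lemma gS_eq : gS = yS + gS * yS := by
  ext1 n
  rw [map_add, PowerSeries.coeff_mul]
  simp only [yS, gS, PowerSeries.coeff_mk]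
  rcases n with _ | _ | n
  · simp [yc_zero, gc_zero]
  · simp [anti_one, yc_zero, yc_one, gc_zero, gc_one]
  · exact gc_eq _ (by omega)

lemma quad : (1 + PowerSeries.C (Polynomial.X : Polynomial ℚ)) * yS ^ 2 =
    (1 + PowerSeries.X) * yS - PowerSeries.X := by
  have h1 := yS_eq
  have h2 := gS_eq
  set t := PowerSeries.C (Polynomial.X : Polynomial ℚ)
  linear_combination (-(1 - yS)) * h1 - t * yS * h2

lemma ode : (1 - 2 * (1 + 2 * PowerSeries.C (Polynomial.X : Polynomial ℚ)) * PowerSeries.X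
      + PowerSeries.X ^ 2) * PowerSeries.derivative (Polynomial ℚ) yS =
    (PowerSeries.X - 1 - 2 * PowerSeries.C (Polynomial.X : Polynomial ℚ)) * yS
      + 1 - PowerSeries.X := by
  have h1 := quad
  have h2 := congrArg (PowerSeries.derivative (Polynomial ℚ)) quad
  set t := PowerSeries.C (Polynomial.X : Polynomial ℚ) with ht
  have h3 : PowerSeries.derivative (Polynomial ℚ) t = 0 := by
    rw [ht]; exact PowerSeries.derivative_C
  have h4 : PowerSeries.derivative (Polynomial ℚ) PowerSeries.X = 1 := PowerSeries.derivative_X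
  simp only [map_sub, map_add, Derivation.leibniz, Derivation.leibniz_pow, smul_eq_mul, h3, h4,
    Derivation.map_one_eq_zero, nsmul_eq_mul] at h2
  set D := PowerSeries.derivative (Polynomial ℚ) yS
  push_cast at h2
  linear_combination (2 * (1 + t) * yS - 1 - PowerSeries.X) * h2 + (2 - 4 * (1 + t) * D) * h1

open Polynomial in
lemma yc_rec (m : ℕ) : ((m : ℚ[X]) + 3) * yc (m + 3) =
    (2 * (m : ℚ[X]) + 3) * (1 + 2 * X) * yc (m + 2) - (m : ℚ[X]) * yc (m + 1) := by
  have h := ode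
  have h' : PowerSeries.derivative ℚ[X] yS
      - PowerSeries.C (2 * (1 + 2 * X) : ℚ[X]) * (PowerSeries.X * PowerSeries.derivative ℚ[X] yS)
      + PowerSeries.X * (PowerSeries.X * PowerSeries.derivative ℚ[X] yS) =
      PowerSeries.X * yS - (yS + PowerSeries.C (2 * X : ℚ[X]) * yS) + 1 - PowerSeries.X := by
    simp only [map_mul, map_add, map_one, map_ofNat]
    linear_combination h
  have h2 := congrArg (PowerSeries.coeff (m + 2)) h'
  simp only [map_sub, map_add, PowerSeries.coeff_C_mul, PowerSeries.coeff_succ_X_mul,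
    PowerSeries.coeff_derivative, PowerSeries.coeff_X, PowerSeries.coeff_one] at h2
  rw [if_neg (by omega), if_neg (by omega)] at h2
  simp only [yS, PowerSeries.coeff_mk, add_assoc, Nat.reduceAdd] at h2
  push_cast at h2
  linear_combination h2

lemma yc_two : yc 2 = Polynomial.X := by
  rw [yc_eq 2 le_rfl]
  have : Finset.HasAntidiagonal.antidiagonal 2 = {(0,2),(1,1),(2,0)} := rfl
  rw [this]
  simp [gc_zero, gc_one, yc_one, yc_zero]

/-- Closed form. -/
noncomputable def dd (m k : ℕ) : ℚ := (m.choose k : ℚ) * ((m + k + 2).choose k : ℚ) / (k + 1)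

lemma choose_a (n k : ℕ) : (((n + 1).choose (k + 1) : ℕ) : ℚ) = (n + 1) / (k + 1) * n.choose k := by
  have h := Nat.add_one_mul_choose_eq n k
  have h' : ((n : ℚ) + 1) * n.choose k = (n + 1).choose (k + 1) * (k + 1) := by exact_mod_cast h
  have : (k : ℚ) + 1 ≠ 0 := by positivity
  field_simp
  linarith

lemma choose_b (n k : ℕ) : ((n.choose (k + 1) : ℕ) : ℚ) = ((n : ℚ) - k) / (k + 1) * n.choose k := by
  have h1 := choose_a n k
  have h2 : (((n + 1).choose (k + 1) : ℕ) : ℚ) = n.choose k + n.choose (k + 1) := by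
    exact_mod_cast Nat.choose_succ_succ n k
  have : (k : ℚ) + 1 ≠ 0 := by positivity
  rw [h2] at h1
  field_simp at h1 ⊢
  linarith

lemma choose_c (n k : ℕ) : ((n.choose k : ℕ) : ℚ) = ((n : ℚ) + 1 - k) / (n + 1) * (n + 1).choose k := by
  rcases k with _ | k
  · have : (n : ℚ) + 1 ≠ 0 := by positivity
    simp [this]
  · rw [choose_a, choose_b]
    have : (n : ℚ) + 1 ≠ 0 := by positivity
    have : (k : ℚ) + 1 ≠ 0 := by positivity
    push_cast
    field_simp
    ring

lemma dd_rec (r s : ℕ) : ((r : ℚ) + 4) * dd (r + 2) (s + 1) =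
    (2 * r + 5) * (dd (r + 1) (s + 1) + 2 * dd (r + 1) s) - (r + 1) * dd r (s + 1) := by
  unfold dd
  have e1 : (((r + 2).choose (s + 1) : ℕ) : ℚ) = (r + 2) / (s + 1) * (r + 1).choose s := by
    rw [choose_a (r + 1) s]; push_cast; ring
  have e2 : (((r + 1).choose (s + 1) : ℕ) : ℚ) = (r + 1 - s) / (s + 1) * (r + 1).choose s := by
    rw [choose_b (r + 1) s]; push_cast; ring
  have e3 : ((r.choose (s + 1) : ℕ) : ℚ) =
      (r - s) / (s + 1) * ((r + 1 - s) / (r + 1) * (r + 1).choose s) := by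
    rw [choose_b r s, choose_c r s]
  have f1 : (((r + s + 3).choose (s + 1) : ℕ) : ℚ) = (r + 3) / (s + 1) * (r + s + 3).choose s := by
    rw [choose_b (r + s + 3) s]; push_cast; ring
  have f2 : (((r + s + 4).choose (s + 1) : ℕ) : ℚ) =
      (r + s + 4) / (s + 1) * (r + s + 3).choose s := by
    rw [choose_a (r + s + 3) s]; push_cast; ring
  have f3 : (((r + s + 5).choose (s + 1) : ℕ) : ℚ) =
      (r + s + 5) / (r + 4) * ((r + s + 4) / (s + 1) * (r + s + 3).choose s) := by
    have := choose_c (r + s + 4) (s + 1)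
    rw [f2] at this
    rw [this]
    push_cast
    have h1 : (r : ℚ) + 4 ≠ 0 := by positivity
    have h2 : (r : ℚ) + s + 4 + 1 ≠ 0 := by positivity
    have h3 : (r : ℚ) + s + 4 + 1 - (s + 1) = r + 4 := by ring
    have h4 : (r : ℚ) + s + 5 = r + s + 4 + 1 := by ring
    rw [h3, h4]
    field_simp
  rw [show r + 2 + (s + 1) + 2 = r + s + 5 by ring, show r + 1 + (s + 1) + 2 = r + s + 4 by ring,
    show r + 1 + s + 2 = r + s + 3 by ring, show r + (s + 1) + 2 = r + s + 3 by ring,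
    e1, e2, e3, f1, f2, f3]
  push_cast
  have h1 : (r : ℚ) + 4 ≠ 0 := by positivity
  have h2 : (r : ℚ) + 1 ≠ 0 := by positivity
  have h3 : (s : ℚ) + 1 ≠ 0 := by positivity
  have h4 : (s : ℚ) + 1 + 1 ≠ 0 := by positivity
  field_simp
  ring

open Polynomial in
lemma yc_coeff_rec (m : ℕ) (k : ℕ) : ((m : ℚ) + 3) * (yc (m + 3)).coeff (k + 1) =
    (2 * m + 3) * ((yc (m + 2)).coeff (k + 1) + 2 * (yc (m + 2)).coeff k)
      - m * (yc (m + 1)).coeff (k + 1) := by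
  have h : C ((m : ℚ) + 3) * yc (m + 3) =
      C (2 * (m : ℚ) + 3) * (yc (m + 2) + C 2 * (X * yc (m + 2))) - C (m : ℚ) * yc (m + 1) := by
    have := yc_rec m
    simp only [map_add, map_mul, map_natCast, map_ofNat]
    linear_combination this
  have h2 := congrArg (fun p => p.coeff (k + 1)) h
  simpa only [coeff_sub, coeff_add, coeff_C_mul, coeff_X_mul] using h2

open Polynomial in
lemma yc_coeff_zero (n : ℕ) (hn : 2 ≤ n) : (yc n).coeff 0 = 0 := by
  rw [yc_eq n hn, coeff_X_mul_zero]

lemma yc_coeff (m : ℕ) : ∀ k, (yc (m + 2)).coeff (k + 1) = dd m k := by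
  induction m using Nat.strong_induction_on with
  | _ m ih =>
  intro k
  rcases m with _ | _ | r
  · rw [zero_add, yc_two, Polynomial.coeff_X]
    rcases k with _ | k <;> simp [dd]
  · have h := yc_coeff_rec 0 k
    have h0 := ih 0 (by omega)
    rw [zero_add] at h0
    simp only [zero_add, h0] at h
    rcases k with _ | _ | k
    · rw [yc_coeff_zero 2 le_rfl] at h
      simp [dd] at h ⊢
      linarith
    · rw [h0] at h
      simp [dd] at h ⊢
      norm_num [Nat.choose] at h ⊢
      linarith
    · rw [h0] at h
      rw [dd, Nat.choose_eq_zero_of_lt (show 1 < k + 1 + 1 by omega)]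
      simp [dd] at h ⊢
      exact h
  · have h := yc_coeff_rec (r + 1) k
    have h1 := ih (r + 1) (by omega)
    have h2 := ih r (by omega)
    rw [show r + 1 + 1 + 2 = r + 1 + 3 by ring]
    rw [h1, show r + 1 + 1 = r + 2 by ring, h2] at h
    have hr : (r : ℚ) + 4 ≠ 0 := by positivity
    apply mul_left_cancel₀ hr
    rcases k with _ | s
    · rw [yc_coeff_zero _ (by omega)] at h
      simp [dd] at h ⊢
      linarith
    · rw [h1] at h
      rw [dd_rec]
      push_cast at h
      linarith

open Polynomial in
lemma wt_coeff (F : Finset (Finset (ℕ × ℕ))) (k : ℕ) :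
    (wt F).coeff k = ((F.filter (fun S => S.card = k)).card : ℚ) := by
  classical
  unfold wt
  rw [finsetSum_coeff, Finset.card_filter]
  push_cast
  refine Finset.sum_congr rfl fun S _ => ?_
  rw [coeff_X_pow]
  simp [eq_comm]

lemma card_fam (n k : ℕ) (hn : 2 ≤ n) (hk : 1 ≤ k) :
    ((famY 1 n).filter (fun S => S.card = k)).card =
      ((n - 2).choose (k - 1) * (n + k - 1).choose (k - 1)) / k := by
  obtain ⟨m, rfl⟩ := Nat.exists_eq_add_of_le' hn
  obtain ⟨j, rfl⟩ := Nat.exists_eq_add_of_le' hk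
  have h := yc_coeff m j
  rw [yc, if_neg (by omega), wt_coeff, dd, eq_div_iff (by positivity)] at h
  have h2 : ((famY 1 (m + 2)).filter (fun S => S.card = j + 1)).card * (j + 1) =
      m.choose j * (m + j + 2).choose j := by exact_mod_cast h
  rw [show m + 2 - 2 = m by omega, show j + 1 - 1 = j by omega,
    show m + 2 + (j + 1) - 1 = m + j + 2 by omega, ← h2]
  exact (Nat.mul_div_cancel _ (by omega)).symm

def ivl (p : ℕ × ℕ) : Finset ℕ := Finset.Icc p.1 p.2

lemma ivl_subset {p q : ℕ × ℕ} (hp : p.1 < p.2) : ivl p ⊆ ivl q ↔ q.1 ≤ p.1 ∧ p.2 ≤ q.2 :=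
  Finset.Icc_subset_Icc_iff hp.le

lemma ivl_inj {p q : ℕ × ℕ} (hp : p.1 < p.2) (hq : q.1 < q.2) (h : ivl p = ivl q) : p = q := by
  have h1 := (ivl_subset hp).1 h.subset
  have h2 := (ivl_subset hq).1 h.symm.subset
  ext <;> omega

lemma ivl_disj {p q : ℕ × ℕ} (hp : p.1 < p.2) (hq : q.1 < q.2) :
    Disjoint (ivl p) (ivl q) ↔ p.2 < q.1 ∨ q.2 < p.1 := by
  rw [Finset.disjoint_left]
  simp only [ivl, Finset.mem_Icc]
  constructor
  · intro h
    by_contra hc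
    exact @h (max p.1 q.1) (by omega) (by omega)
  · intro h x hx
    omega

lemma card_nested (n : ℕ) (hn : 2 ≤ n) (K : Finset ℕ) :
    Nat.card {S : Finset (Finset ℕ) // ∃ k, k ∈ K ∧ IsIntNested n k S} =
      ((famY 1 n).filter (fun S => S.card ∈ K)).card := by
  classical
  have hinj : Set.InjOn (fun S : Finset (ℕ × ℕ) => S.image ivl)
      ((famY 1 n).filter (fun S => S.card ∈ K) : Finset _) := by
    intro S hS T hT h
    simp only [Finset.coe_filter, Set.mem_ofPred_eq, mem_famY, mem_famG] at hS hT
    have aux : ∀ S T : Finset (ℕ × ℕ), (∀ p ∈ S, 1 ≤ p.1 ∧ p.1 < p.2 ∧ p.2 ≤ n) →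
        (∀ p ∈ T, 1 ≤ p.1 ∧ p.1 < p.2 ∧ p.2 ≤ n) → S.image ivl = T.image ivl → S ⊆ T := by
      intro S T hS hT h p hp
      have : ivl p ∈ T.image ivl := h ▸ Finset.mem_image_of_mem _ hp
      obtain ⟨q, hq, he⟩ := Finset.mem_image.1 this
      rw [← ivl_inj (hT q hq).2.1 (hS p hp).2.1 he]
      exact hq
    exact (aux S T hS.1.1.1 hT.1.1.1 h).antisymm (aux T S hT.1.1.1 hS.1.1.1 h.symm)
  rw [← Finset.card_image_of_injOn hinj]
  refine Nat.subtype_card _ fun F => ?_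
  rw [Finset.mem_image]
  constructor
  · rintro ⟨S, hS, rfl⟩
    simp only [Finset.mem_filter, mem_famY, mem_famG, lam] at hS
    obtain ⟨⟨⟨h1, h2⟩, h3⟩, h4⟩ := hS
    refine ⟨S.card, h4, ?_, ?_, ?_, ?_⟩
    · exact Finset.card_image_of_injOn fun p hp q hq h =>
        ivl_inj (h1 p hp).2.1 (h1 q hq).2.1 h
    · exact Finset.mem_image.2 ⟨(1, n), h3 (by omega), rfl⟩
    · intro A hA
      obtain ⟨p, hp, rfl⟩ := Finset.mem_image.1 hA
      have := h1 p hp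
      refine ⟨?_, p.1, p.2, this.1, this.2.1.le, this.2.2, rfl⟩
      rw [ivl, Nat.card_Icc]
      omega
    · intro A hA B hB
      obtain ⟨p, hp, rfl⟩ := Finset.mem_image.1 hA
      obtain ⟨q, hq, rfl⟩ := Finset.mem_image.1 hB
      have hp1 := h1 p hp
      have hq1 := h1 q hq
      rw [ivl_subset hp1.2.1, ivl_subset hq1.2.1, ivl_disj hp1.2.1 hq1.2.1]
      have := h2 p hp q hq
      tauto
  · rintro ⟨k, hk, h1, h2, h3, h4⟩
    set U := (Finset.Icc 1 n ×ˢ Finset.Icc 1 n).filter (fun p : ℕ × ℕ => p.1 < p.2) with hU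
    have memU : ∀ p, p ∈ U ↔ 1 ≤ p.1 ∧ p.1 < p.2 ∧ p.2 ≤ n := by
      intro p
      simp only [hU, Finset.mem_filter, Finset.mem_product, Finset.mem_Icc]
      omega
    have himg : (U.filter (fun p => ivl p ∈ F)).image ivl = F := by
      ext A
      simp only [Finset.mem_image, Finset.mem_filter]
      constructor
      · rintro ⟨p, ⟨_, hp⟩, rfl⟩
        exact hp
      · intro hA
        obtain ⟨hc, i, j, hi, hij, hj, rfl⟩ := h3 A hA
        rw [Nat.card_Icc] at hc
        exact ⟨(i, j), ⟨(memU _).2 ⟨hi, by dsimp only; omega, hj⟩, hA⟩, rfl⟩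
    refine ⟨U.filter (fun p => ivl p ∈ F), ?_, himg⟩
    simp only [Finset.mem_filter, mem_famY, mem_famG, lam, memU]
    refine ⟨⟨⟨fun p hp => hp.1, fun p hp q hq => ?_⟩, fun _ => ⟨⟨le_rfl, by omega, le_rfl⟩, h2⟩⟩, ?_⟩
    · have := h4 _ hp.2 _ hq.2
      rw [ivl_subset hp.1.2.1, ivl_subset hq.1.2.1, ivl_disj hp.1.2.1 hq.1.2.1] at this
      tauto
    · have : (U.filter (fun p => ivl p ∈ F)).card = k := by
        rw [← h1]
        conv_rhs => rw [← himg]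
        symm
        refine Finset.card_image_of_injOn fun p hp q hq h => ?_
        simp only [Finset.coe_filter, Set.mem_ofPred_eq, memU] at hp hq
        exact ivl_inj hp.1.2.1 hq.1.2.1 h
      rw [this]
      exact hk

/-- The total number over `k = 1,...,n-1` of nested interval families (i.e. of all
dissections of a convex `(n+1)`-gon by noncrossing diagonals, the super-Catalan /
little Schröder number) equals `Σ_{k=1}^{n-1} (1/k)·C(n-2,k-1)·C(n+k-1,k-1)`;
the division is exact. -/
theorem stmt17 (n : ℕ) (hn : 2 ≤ n) :
    Nat.card {S : Finset (Finset ℕ) // ∃ k, 1 ≤ k ∧ k ≤ n - 1 ∧ IsIntNested n k S} =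
      ∑ k ∈ Finset.Icc 1 (n - 1),
        ((n - 2).choose (k - 1) * (n + k - 1).choose (k - 1)) / k := by
  classical
  have h := card_nested n hn (Finset.Icc 1 (n - 1))
  simp only [Finset.mem_Icc, and_assoc] at h
  rw [h, Finset.card_eq_sum_card_fiberwise (f := Finset.card) (t := Finset.Icc 1 (n - 1))]
  · refine Finset.sum_congr rfl fun k hk => ?_
    rw [Finset.mem_Icc] at hk
    rw [← card_fam n k hn hk.1, Finset.filter_filter]
    congr 1
    refine Finset.filter_congr fun S _ => ?_
    constructor
    · exact fun h => h.2
    · rintro rfl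
      exact ⟨hk, rfl⟩
  · intro S hS
    simpa using (Finset.mem_filter.1 hS).2
end
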